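/- arXiv:0901.3978 — 11 statements merged into one kernel-verified Lean document; each statement's English description precedes it below -/
import Mathlib

section
/- Let d ≥ 1 be an integer, M ∈ (0,∞], and let m be a mobility on [0,M); if M < ∞ set m(M) := lim_{r↑M} m(r). Define the action density φ : ℝ × ℝ^d → [0,∞] by φ(ρ,w) = |w|²/m(ρ) if ρ ∈ [0,M] ∩ ℝ (with the conventions 0/0 := 0 and a/0 := +∞ for a > 0), and φ(ρ,w) = +∞ if ρ < 0 or ρ > M. Then φ is jointly convex and lower semicontinuous on ℝ × ℝ^d. -/
open Set ENNReal

lemma key_aux (A s c : ℝ) (hs : 0 ≤ s) (hc : 0 ≤ c) :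
    ENNReal.ofReal A / ENNReal.ofReal s ≤ ENNReal.ofReal c ↔ A ≤ c * s := by
  rw [← ENNReal.ofReal_le_ofReal_iff (mul_nonneg hc hs), ENNReal.ofReal_mul hc]
  constructor
  · intro h
    rcases eq_or_ne (ENNReal.ofReal s) 0 with h0 | h0
    · rw [h0] at h ⊢
      have : ENNReal.ofReal A = 0 := by
        by_contra h1
        rw [ENNReal.div_zero h1] at h
        exact ENNReal.ofReal_ne_top (top_le_iff.1 h)
      rw [this]; exact zero_le
    · exact (ENNReal.div_le_iff h0 ENNReal.ofReal_ne_top).1 h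
  · exact ENNReal.div_le_of_le_mul

lemma cs_aux (a b A B s t x y : ℝ) (ha : 0 ≤ a) (hb : 0 ≤ b)
    (hs : 0 ≤ s) (ht : 0 ≤ t) (hx : 0 ≤ x) (hy : 0 ≤ y)
    (h1 : A ^ 2 ≤ x * s) (h2 : B ^ 2 ≤ y * t) :
    (a * A + b * B) ^ 2 ≤ (a * x + b * y) * (a * s + b * t) := by
  have h3 : 2 * (A * B) ≤ x * t + y * s := by
    apply le_of_abs_le
    apply abs_le_of_sq_le_sq _ (by positivity)
    have := mul_le_mul h1 h2 (sq_nonneg B) (by positivity)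
    nlinarith [sq_nonneg (x * t - y * s)]
  nlinarith [mul_le_mul_of_nonneg_left h3 (mul_nonneg ha hb),
    mul_le_mul_of_nonneg_left h1 (mul_nonneg ha ha),
    mul_le_mul_of_nonneg_left h2 (mul_nonneg hb hb)]

/-- The action density `φ(ρ,w) = |w|²/m(ρ)` (with the conventions `0/0 = 0`,
`a/0 = ∞` for `a > 0`, these being the conventions of `ENNReal` division)
associated with a concave mobility `m` on `[0,M)` (extended continuously to `M`
when `M < ∞`) is jointly convex and lower semicontinuous on `ℝ × ℝᵈ`. -/
theorem stmt_0 (d : ℕ) (hd : 1 ≤ d) (M : ℝ≥0∞) (hM : 0 < M) (m : ℝ → ℝ)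
    (hm_cont : ContinuousOn m {r : ℝ | 0 ≤ r ∧ ENNReal.ofReal r ≤ M})
    (hm_conc : ConcaveOn ℝ {r : ℝ | 0 ≤ r ∧ ENNReal.ofReal r ≤ M} m)
    (hm_nonneg : ∀ r : ℝ, 0 ≤ r → ENNReal.ofReal r ≤ M → 0 ≤ m r)
    (hm_pos : ∀ r : ℝ, 0 < r → ENNReal.ofReal r < M → 0 < m r)
    (φ : ℝ × EuclideanSpace ℝ (Fin d) → ℝ≥0∞)
    (hφ : ∀ p : ℝ × EuclideanSpace ℝ (Fin d),
      φ p = if 0 ≤ p.1 ∧ ENNReal.ofReal p.1 ≤ M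
        then ENNReal.ofReal (‖p.2‖ ^ 2) / ENNReal.ofReal (m p.1) else ∞) :
    (∀ p q : ℝ × EuclideanSpace ℝ (Fin d), ∀ a b : ℝ, 0 ≤ a → 0 ≤ b → a + b = 1 →
      φ (a • p + b • q) ≤ ENNReal.ofReal a * φ p + ENNReal.ofReal b * φ q) ∧
    LowerSemicontinuous φ := by
  constructor
  · intro p q a b ha hb hab
    rcases ha.eq_or_lt with rfl | ha'
    · obtain rfl : b = 1 := by linarith
      simp
    rcases hb.eq_or_lt with rfl | hb'
    · obtain rfl : a = 1 := by linarith
      simp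
    by_cases hp : φ p = ∞
    · rw [hp, ENNReal.mul_top (by simpa using ha')]; simp
    by_cases hq : φ q = ∞
    · rw [hq, ENNReal.mul_top (by simpa using hb')]; simp
    have dp : 0 ≤ p.1 ∧ ENNReal.ofReal p.1 ≤ M := by
      by_contra h; exact hp (by rw [hφ, if_neg h])
    have dq : 0 ≤ q.1 ∧ ENNReal.ofReal q.1 ≤ M := by
      by_contra h; exact hq (by rw [hφ, if_neg h])
    have dr := hm_conc.1 dp dq ha hb hab
    have hc := hm_conc.2 dp dq ha hb hab
    have hs := hm_nonneg _ dp.1 dp.2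
    have ht := hm_nonneg _ dq.1 dq.2
    have hr := hm_nonneg _ dr.1 dr.2
    have ep := (hφ p).symm.trans (ENNReal.ofReal_toReal hp).symm
    have eq := (hφ q).symm.trans (ENNReal.ofReal_toReal hq).symm
    rw [if_pos dp] at ep
    rw [if_pos dq] at eq
    have hx : 0 ≤ (φ p).toReal := ENNReal.toReal_nonneg
    have hy : 0 ≤ (φ q).toReal := ENNReal.toReal_nonneg
    have h1 := (key_aux _ _ _ hs hx).1 ep.le
    have h2 := (key_aux _ _ _ ht hy).1 eq.le
    have h3 := cs_aux a b _ _ _ _ _ _ ha hb hs ht hx hy h1 h2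
    have hR : ENNReal.ofReal a * φ p + ENNReal.ofReal b * φ q
        = ENNReal.ofReal (a * (φ p).toReal + b * (φ q).toReal) := by
      rw [ENNReal.ofReal_add (by positivity) (by positivity), ENNReal.ofReal_mul ha,
        ENNReal.ofReal_mul hb, ENNReal.ofReal_toReal hp, ENNReal.ofReal_toReal hq]
    rw [hR, hφ, if_pos (by exact dr)]
    refine (key_aux _ _ _ hr (by positivity)).2 ?_
    have hn : ‖(a • p + b • q).2‖ ≤ a * ‖p.2‖ + b * ‖q.2‖ := by
      refine (norm_add_le _ _).trans (le_of_eq ?_)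
      simp [norm_smul, abs_of_nonneg ha, abs_of_nonneg hb]
    calc ‖(a • p + b • q).2‖ ^ 2 ≤ (a * ‖p.2‖ + b * ‖q.2‖) ^ 2 := by gcongr
      _ ≤ _ := h3
      _ ≤ _ := by
        apply mul_le_mul_of_nonneg_left _ (by positivity)
        simpa using hc
  · rw [lowerSemicontinuous_iff_isClosed_preimage]
    intro c
    rcases eq_or_ne c ∞ with rfl | hc
    · simp
    have hset : φ ⁻¹' Iic c = {p ∈ {p : ℝ × EuclideanSpace ℝ (Fin d) |
        0 ≤ p.1 ∧ ENNReal.ofReal p.1 ≤ M} | ‖p.2‖ ^ 2 ≤ c.toReal * m p.1} := by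
      ext p
      simp only [mem_preimage, mem_Iic, mem_setOf_eq]
      rw [hφ]
      by_cases h : 0 ≤ p.1 ∧ ENNReal.ofReal p.1 ≤ M
      · rw [if_pos h, ← key_aux _ _ _ (hm_nonneg _ h.1 h.2) ENNReal.toReal_nonneg,
          ENNReal.ofReal_toReal hc]
        tauto
      · rw [if_neg h]
        simp [h, hc]
    rw [hset]
    apply IsClosed.isClosed_le
    · exact (isClosed_le continuous_const continuous_fst).inter
        (isClosed_le (ENNReal.continuous_ofReal.comp continuous_fst) continuous_const)
    · fun_prop
    · exact continuousOn_const.mul (hm_cont.comp continuous_fst.continuousOn fun p hp => hp)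
end

section
/- Let d ≥ 1 be an integer and α ∈ (1/2, 1]. Consider the logarithmic entropy density U(r) = r·log r, so that U''(r) = 1/r, the mobility m(r) = r^α, the associated pressure derivative P'(r) = m(r)·U''(r) = r^{α−1}, and H(r) := ∫₀^r P'(z)·m'(z) dz = (α/(2α−1))·r^{2α−1}. Then the generalized McCann inequality P'(r)·m(r) ≥ (1 − 1/d)·H(r) holds for every r > 0 if and only if α ≥ d/(d+1). -/
open Set

/-- For the logarithmic entropy `U(r) = r log r` (so `U''(r) = 1/r`) and the
mobility `m(r) = r^α` with `α ∈ (1/2,1]`, so that `P'(r) = m(r)·U''(r) = r^(α−1)`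
and `H(r) = ∫₀^r P'·m' = (α/(2α−1)) r^(2α−1)`, the generalized McCann inequality
`P'(r)·m(r) ≥ (1 − 1/d)·H(r)` holds for every `r > 0` iff `α ≥ d/(d+1)`. -/
theorem stmt_3 (d : ℕ) (hd : 1 ≤ d) (α : ℝ) (hα0 : 1 / 2 < α) (hα1 : α ≤ 1) :
    (∀ r : ℝ, 0 < r →
      r ^ (α - 1) * r ^ α ≥
        (1 - 1 / (d : ℝ)) * ((α / (2 * α - 1)) * r ^ (2 * α - 1))) ↔
    α ≥ (d : ℝ) / ((d : ℝ) + 1) := by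
  have hD : (0 : ℝ) < d := by exact_mod_cast hd
  have hb : 0 < 2 * α - 1 := by linarith
  have key : (1 - 1 / (d : ℝ)) * (α / (2 * α - 1)) ≤ 1 ↔ α ≥ (d : ℝ) / ((d : ℝ) + 1) := by
    have e : (1 - 1 / (d : ℝ)) * (α / (2 * α - 1)) = ((d - 1) * α) / (d * (2 * α - 1)) := by
      field_simp
    rw [e, div_le_one (by positivity), ge_iff_le, div_le_iff₀ (by positivity)]
    constructor <;> intro h <;> linarith
  rw [← key]
  constructor
  · intro h
    have h1 := h 1 one_pos
    simpa only [Real.one_rpow, mul_one] using h1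
  · intro h r hr
    have hp : r ^ (α - 1) * r ^ α = r ^ (2 * α - 1) := by
      rw [← Real.rpow_add hr]
      congr 1
      ring
    rw [hp, ← mul_assoc]
    have h0 : 0 < r ^ (2 * α - 1) := Real.rpow_pos_of_pos hr _
    exact mul_le_of_le_one_left h0.le h
end

section
/- Let d ≥ 1 be an integer and let m : [0,∞) → [0,∞) be a continuous, concave, nondecreasing function strictly positive on (0,∞), with almost-everywhere derivative m' ≥ 0. Let P : [0,∞) → ℝ be nondecreasing, locally absolutely continuous with P(0) = 0 and P'·m' locally integrable, and assume P'(r)·m(r) ≥ (1 − 1/d)·H(r) ≥ 0 for almost every r > 0, where H(r) := ∫₀^r P'(z)·m'(z) dz. Then for every a ≥ 0: (i) setting m_a(r) := m(r + a) and H_a(r) := ∫₀^r P'(z)·m'(z + a) dz, one has P'(r)·m_a(r) ≥ (1 − 1/d)·H_a(r) ≥ 0 for almost every r > 0; (ii) setting P_a(r) := P(max(r − a, 0)) and H̃(r) := ∫₀^r P_a'(z)·m'(z) dz, one has P_a'(r)·m(r) ≥ (1 − 1/d)·H̃(r) ≥ 0 for almost every r > 0. -/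
open Set MeasureTheory

/-- Shift property of the generalized McCann condition, case `M = +∞`: if a
pressure `P` (encoded through a density `p` with `P r = ∫₀^r p`) satisfies
`P'(r)·m(r) ≥ (1 − 1/d)·H(r) ≥ 0` a.e. on `(0,∞)` with `H(r) = ∫₀^r P'·m'`,
then for every `a ≥ 0`:
(i) the shifted mobility `mₐ(r) = m(r+a)` works, i.e.
`P'(r)·m(r+a) ≥ (1 − 1/d)·∫₀^r P'(z)·m'(z+a) dz ≥ 0` a.e.; and
(ii) the shifted pressure `Pₐ(r) = P(max(r−a,0))`, whose a.e. derivative is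
`Pₐ'(z) = p(z−a)` for `z > a` and `0` for `z < a`, satisfies
`Pₐ'(r)·m(r) ≥ (1 − 1/d)·∫₀^r Pₐ'(z)·m'(z) dz ≥ 0` a.e. -/
theorem stmt_6 (d : ℕ) (hd : 1 ≤ d) (m m' : ℝ → ℝ)
    (hm_cont : ContinuousOn m (Ici 0)) (hm_conc : ConcaveOn ℝ (Ici 0) m)
    (hm_mono : MonotoneOn m (Ici 0)) (hm_pos : ∀ r : ℝ, 0 < r → 0 < m r)
    (hm_deriv : ∀ᵐ r ∂(volume.restrict (Ioi (0:ℝ))),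
      HasDerivAt m (m' r) r ∧ 0 ≤ m' r)
    (P p : ℝ → ℝ) (hPmono : MonotoneOn P (Ici 0))
    (hP : ∀ r : ℝ, 0 ≤ r → P r = ∫ z in Ioc 0 r, p z)
    (hp_loc : ∀ R : ℝ, 0 < R → IntegrableOn p (Ioc 0 R))
    (hpm'_loc : ∀ R : ℝ, 0 < R → IntegrableOn (fun z => p z * m' z) (Ioc 0 R))
    (hgmc : ∀ᵐ r ∂(volume.restrict (Ioi (0:ℝ))),
      p r * m r ≥ (1 - 1 / (d : ℝ)) * ∫ z in Ioc 0 r, p z * m' z ∧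
      0 ≤ ∫ z in Ioc 0 r, p z * m' z)
    (a : ℝ) (ha : 0 ≤ a) :
    (∀ᵐ r ∂(volume.restrict (Ioi (0:ℝ))),
      p r * m (r + a) ≥ (1 - 1 / (d : ℝ)) * ∫ z in Ioc 0 r, p z * m' (z + a) ∧
      0 ≤ ∫ z in Ioc 0 r, p z * m' (z + a)) ∧
    (∀ᵐ r ∂(volume.restrict (Ioi (0:ℝ))),
      (if a < r then p (r - a) else 0) * m r ≥
        (1 - 1 / (d : ℝ)) *
          ∫ z in Ioc 0 r, (if a < z then p (z - a) else 0) * m' z ∧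
      0 ≤ ∫ z in Ioc 0 r, (if a < z then p (z - a) else 0) * m' z) := by
  have hc : 0 ≤ 1 - 1 / (d : ℝ) := by
    have h1 : (1:ℝ) ≤ d := by exact_mod_cast hd
    have : 1 / (d:ℝ) ≤ 1 := by
      rw [div_le_one (by linarith)]; exact h1
    linarith
  have hshift : ∀ (b : ℝ) (Q : ℝ → Prop), (∀ᵐ r : ℝ, Q r) → ∀ᵐ r : ℝ, Q (r + b) :=
    fun b Q h => (measurePreserving_add_right volume b).quasiMeasurePreserving.ae h
  rw [ae_restrict_iff' measurableSet_Ioi] at hm_deriv hgmc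
  have hp : ∀ᵐ r : ℝ, 0 < r → 0 ≤ p r := by
    filter_upwards [hgmc] with r h hr
    obtain ⟨h1, h2⟩ := h hr
    have h3 : 0 ≤ p r * m r := le_trans (mul_nonneg hc h2) h1
    exact nonneg_of_mul_nonneg_left h3 (hm_pos r hr)
  have hm'a : ∀ᵐ r : ℝ, 0 < r → 0 ≤ m' (r + a) ∧ m' (r + a) ≤ m' r := by
    filter_upwards [hm_deriv, hshift a _ hm_deriv] with r h h' hr
    have hr : 0 < r := hr
    have hra : 0 < r + a := by linarith
    obtain ⟨h1, h2⟩ := h hr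
    obtain ⟨h3, h4⟩ := h' hra
    refine ⟨h4, ?_⟩
    rcases ha.eq_or_lt with rfl | ha'
    · simp
    · have hlt : r < r + a := by linarith
      exact (hm_conc.le_slope_of_hasDerivAt hr.le hra.le hlt h3).trans
        (hm_conc.slope_le_of_hasDerivAt hr.le hra.le hlt h1)
  have key : ∀ r : ℝ, 0 < r → 0 ≤ (∫ z in Ioc 0 r, p z * m' (z + a)) ∧
      (∫ z in Ioc 0 r, p z * m' (z + a)) ≤ ∫ z in Ioc 0 r, p z * m' z := by
    intro r hr
    have h0 : ∀ᵐ z ∂(volume.restrict (Ioc 0 r)), 0 ≤ p z * m' (z + a) := by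
      rw [ae_restrict_iff' measurableSet_Ioc]
      filter_upwards [hp, hm'a] with z h1 h2 hz
      exact mul_nonneg (h1 hz.1) (h2 hz.1).1
    refine ⟨integral_nonneg_of_ae h0, integral_mono_of_nonneg h0 (hpm'_loc r hr) ?_⟩
    change ∀ᵐ z ∂(volume.restrict (Ioc 0 r)), p z * m' (z + a) ≤ p z * m' z
    rw [ae_restrict_iff' measurableSet_Ioc]
    filter_upwards [hp, hm'a] with z h1 h2 hz
    exact mul_le_mul_of_nonneg_left (h2 hz.1).2 (h1 hz.1)
  have part1 : ∀ᵐ r : ℝ, 0 < r →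
      p r * m (r + a) ≥ (1 - 1 / (d : ℝ)) * ∫ z in Ioc 0 r, p z * m' (z + a) ∧
      0 ≤ ∫ z in Ioc 0 r, p z * m' (z + a) := by
    filter_upwards [hp, hgmc] with r h1 h2 hr
    obtain ⟨k1, k2⟩ := key r hr
    refine ⟨?_, k1⟩
    have hmm : m r ≤ m (r + a) :=
      hm_mono (mem_Ici.2 hr.le) (mem_Ici.2 (by linarith)) (by linarith)
    exact ((mul_le_mul_of_nonneg_left k2 hc).trans (h2 hr).1).trans
      (mul_le_mul_of_nonneg_left hmm (h1 hr))
  refine ⟨(ae_restrict_iff' measurableSet_Ioi).2 part1, ?_⟩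
  rw [ae_restrict_iff' measurableSet_Ioi]
  filter_upwards [hshift (-a) _ part1] with r h hr
  have hr : 0 < r := hr
  have heq : (fun z => (if a < z then p (z - a) else 0) * m' z) =
      (Ioi a).indicator (fun z => p (z - a) * m' z) := by
    ext z
    by_cases hz : a < z <;> simp [hz]
  rw [heq, setIntegral_indicator measurableSet_Ioi, Ioc_inter_Ioi, max_eq_right ha]
  by_cases har : a < r
  · have hi : ∫ z in Ioc a r, p (z - a) * m' z = ∫ z in Ioc 0 (r - a), p z * m' (z + a) := by
      rw [← intervalIntegral.integral_of_le har.le,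
        ← intervalIntegral.integral_of_le (by linarith : (0:ℝ) ≤ r - a)]
      have := intervalIntegral.integral_comp_sub_right
        (a := a) (b := r) (fun z => p z * m' (z + a)) a
      simpa using this
    have h' := h (by linarith)
    rw [← sub_eq_add_neg, sub_add_cancel] at h'
    rw [hi, if_pos har]
    exact h'
  · rw [if_neg har, Ioc_eq_empty har]
    simp
end

section
/- Let r₀ > 0, let m : [0, r₀] → [0,∞) be concave, continuous and strictly positive on (0, r₀], and let q : (0, r₀) → [0,∞) be integrable. Then sup over r ∈ (0, r₀) of ∫₀^{r₀} (max(z − r, 0)/m(z))·q(z) dz is finite; moreover the function F(r) := ∫₀^{r₀} (max(z − r, 0)/m(z))·q(z) dz is nonincreasing and bounded on (0, r₀) and has a finite limit as r ↓ 0. Consequently, any function U on (0, r₀] of the form U(r) = U(r₀) + U'(r₀)(r − r₀) + F(r) is bounded near 0 and lim_{r↓0} U(r) exists and is finite. -/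
open Set MeasureTheory Filter

/-- Boundedness near `0` of energies under the generalized McCann condition:
for a concave, continuous mobility `m > 0` on `(0,r₀]` and an integrable
nonnegative weight `q` on `(0,r₀)`, the function
`F(r) = ∫₀^{r₀} (max(z−r,0)/m(z))·q(z) dz` is bounded above on `(0,r₀)`,
nonincreasing, and has a finite limit as `r ↓ 0`; consequently any
`U(r) = U(r₀) + U'(r₀)(r−r₀) + F(r)` is bounded on `(0,r₀]` and has a finite
limit as `r ↓ 0`. -/
theorem stmt_7 (r₀ : ℝ) (hr₀ : 0 < r₀) (m : ℝ → ℝ)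
    (hm_conc : ConcaveOn ℝ (Icc 0 r₀) m) (hm_cont : ContinuousOn m (Icc 0 r₀))
    (hm_pos : ∀ r ∈ Ioc 0 r₀, 0 < m r)
    (q : ℝ → ℝ) (hq_nonneg : ∀ z ∈ Ioo 0 r₀, 0 ≤ q z)
    (hq_int : IntegrableOn q (Ioo 0 r₀)) :
    (∃ C : ℝ, ∀ r ∈ Ioo 0 r₀,
      (∫ z in Ioo 0 r₀, (max (z - r) 0 / m z) * q z) ≤ C) ∧
    AntitoneOn (fun r => ∫ z in Ioo 0 r₀, (max (z - r) 0 / m z) * q z)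
      (Ioo 0 r₀) ∧
    (∃ L : ℝ, Tendsto (fun r => ∫ z in Ioo 0 r₀, (max (z - r) 0 / m z) * q z)
      (nhdsWithin 0 (Ioi 0)) (nhds L)) ∧
    (∀ c₁ c₂ : ℝ,
      (∃ C : ℝ, ∀ r ∈ Ioc 0 r₀,
        |c₁ + c₂ * (r - r₀) + ∫ z in Ioo 0 r₀, (max (z - r) 0 / m z) * q z| ≤ C) ∧
      ∃ L : ℝ, Tendsto
        (fun r => c₁ + c₂ * (r - r₀) + ∫ z in Ioo 0 r₀, (max (z - r) 0 / m z) * q z)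
        (nhdsWithin 0 (Ioi 0)) (nhds L)) := by
  have h0mem : (0:ℝ) ∈ Icc 0 r₀ := ⟨le_rfl, hr₀.le⟩
  have hrmem : r₀ ∈ Icc 0 r₀ := ⟨hr₀.le, le_rfl⟩
  have hmr : 0 < m r₀ := hm_pos r₀ ⟨hr₀, le_rfl⟩
  have hm0 : 0 ≤ m 0 := by
    have h1 : Tendsto m (nhdsWithin 0 (Ioo 0 r₀)) (nhds (m 0)) :=
      (hm_cont 0 h0mem).mono_left (nhdsWithin_mono _ Ioo_subset_Icc_self)
    haveI : (nhdsWithin (0:ℝ) (Ioo 0 r₀)).NeBot := left_nhdsWithin_Ioo_neBot hr₀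
    refine ge_of_tendsto h1 ?_
    filter_upwards [self_mem_nhdsWithin] with z hz
    exact (hm_pos z ⟨hz.1, hz.2.le⟩).le
  have hlow : ∀ z ∈ Ioo 0 r₀, z * m r₀ ≤ m z * r₀ := by
    intro z hz
    have hz1 : z / r₀ ≤ 1 := (div_le_one hr₀).2 hz.2.le
    have hz0 : 0 ≤ z / r₀ := div_nonneg hz.1.le hr₀.le
    have h := hm_conc.2 h0mem hrmem (sub_nonneg.2 hz1) hz0 (by ring)
    simp only [smul_eq_mul, mul_zero, zero_add, div_mul_cancel₀ z hr₀.ne'] at h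
    have h2 : z / r₀ * m r₀ ≤ m z := by
      have := mul_nonneg (sub_nonneg.2 hz1) hm0
      linarith
    rw [div_mul_eq_mul_div, div_le_iff₀ hr₀] at h2
    exact h2
  have hnn : ∀ r : ℝ, ∀ z ∈ Ioo 0 r₀, 0 ≤ max (z - r) 0 / m z * q z := by
    intro r z hz
    exact mul_nonneg (div_nonneg (le_max_right _ _) (hm_pos z ⟨hz.1, hz.2.le⟩).le)
      (hq_nonneg z hz)
  have hub : ∀ r : ℝ, 0 ≤ r → ∀ z ∈ Ioo 0 r₀,
      max (z - r) 0 / m z * q z ≤ r₀ / m r₀ * q z := by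
    intro r hr z hz
    have hmz := hm_pos z ⟨hz.1, hz.2.le⟩
    refine mul_le_mul_of_nonneg_right ?_ (hq_nonneg z hz)
    rw [div_le_div_iff₀ hmz hmr]
    have h1 : max (z - r) 0 ≤ z := max_le (by linarith) hz.1.le
    have h2 := mul_le_mul_of_nonneg_right h1 hmr.le
    have h3 := hlow z hz
    linarith
  have hmeas : ∀ r : ℝ, AEStronglyMeasurable (fun z => max (z - r) 0 / m z * q z)
      (volume.restrict (Ioo 0 r₀)) := by
    intro r
    refine AEStronglyMeasurable.mul ?_ hq_int.aestronglyMeasurable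
    refine ContinuousOn.aestronglyMeasurable ?_ measurableSet_Ioo
    refine ContinuousOn.div (by fun_prop) (hm_cont.mono Ioo_subset_Icc_self) ?_
    intro z hz
    exact (hm_pos z ⟨hz.1, hz.2.le⟩).ne'
  have hKint : IntegrableOn (fun z => r₀ / m r₀ * q z) (Ioo 0 r₀) := hq_int.const_mul _
  have hbd : ∀ r : ℝ, 0 ≤ r → ∀ᵐ z ∂(volume.restrict (Ioo 0 r₀)),
      ‖max (z - r) 0 / m z * q z‖ ≤ r₀ / m r₀ * q z := by
    intro r hr
    filter_upwards [ae_restrict_mem measurableSet_Ioo] with z hz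
    rw [Real.norm_of_nonneg (hnn r z hz)]
    exact hub r hr z hz
  have hint : ∀ r : ℝ, 0 ≤ r →
      IntegrableOn (fun z => max (z - r) 0 / m z * q z) (Ioo 0 r₀) := by
    intro r hr
    exact Integrable.mono' hKint (hmeas r) (hbd r hr)
  have hanti : ∀ r s : ℝ, 0 ≤ r → r ≤ s →
      (∫ z in Ioo 0 r₀, (max (z - s) 0 / m z) * q z) ≤
      ∫ z in Ioo 0 r₀, (max (z - r) 0 / m z) * q z := by
    intro r s hr hrs
    refine setIntegral_mono_on (hint s (hr.trans hrs)) (hint r hr) measurableSet_Ioo ?_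
    intro z hz
    refine mul_le_mul_of_nonneg_right ?_ (hq_nonneg z hz)
    refine div_le_div_of_nonneg_right ?_ (hm_pos z ⟨hz.1, hz.2.le⟩).le
    exact max_le_max (by linarith) le_rfl
  have hF0 : ∀ r : ℝ, 0 ≤ ∫ z in Ioo 0 r₀, (max (z - r) 0 / m z) * q z := fun r =>
    setIntegral_nonneg measurableSet_Ioo (hnn r)
  have hlim : Tendsto (fun r => ∫ z in Ioo 0 r₀, (max (z - r) 0 / m z) * q z)
      (nhdsWithin 0 (Ioi 0)) (nhds (∫ z in Ioo 0 r₀, (max (z - 0) 0 / m z) * q z)) := by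
    refine tendsto_integral_filter_of_dominated_convergence (fun z => r₀ / m r₀ * q z)
      (Eventually.of_forall hmeas) ?_ hKint ?_
    · filter_upwards [self_mem_nhdsWithin] with r hr
      exact hbd r (le_of_lt hr)
    · refine Eventually.of_forall fun z => ?_
      have hc : Continuous (fun r : ℝ => max (z - r) 0 / m z * q z) := by fun_prop
      exact (hc.tendsto 0).mono_left nhdsWithin_le_nhds
  refine ⟨⟨_, fun r hr => hanti 0 r le_rfl hr.1.le⟩,
    fun r hr s _ hrs => hanti r s hr.1.le hrs, ⟨_, hlim⟩, fun c₁ c₂ => ⟨?_, ?_⟩⟩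
  · refine ⟨|c₁| + |c₂| * r₀ + ∫ z in Ioo 0 r₀, (max (z - 0) 0 / m z) * q z, fun r hr => ?_⟩
    refine (abs_add_le _ _).trans (add_le_add ((abs_add_le _ _).trans
      (add_le_add le_rfl ?_)) ?_)
    · rw [abs_mul]
      refine mul_le_mul_of_nonneg_left ?_ (abs_nonneg _)
      rw [abs_le]
      constructor <;> linarith [hr.1, hr.2]
    · rw [abs_of_nonneg (hF0 r)]
      exact hanti 0 r le_rfl hr.1.le
  · have hc : Continuous (fun r : ℝ => c₁ + c₂ * (r - r₀)) := by fun_prop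
    exact ⟨_, ((hc.tendsto 0).mono_left nhdsWithin_le_nhds).add hlim⟩
end

section
/- Let d ≥ 1 be an integer. Let m : [0,∞) → [0,∞) be continuous, concave, strictly positive on (0,∞) and of class C¹ on (0,∞), and let P : [0,∞) → ℝ be continuous with P(0) = 0, of class C² on (0,∞), with P'(z)·m'(z) integrable near 0. If the map r ↦ m(r)^{1/d}·P'(r) is strictly positive and nondecreasing on (0,∞), then, setting H(r) := ∫₀^r P'(z)·m'(z) dz, one has P'(r)·m(r) ≥ (1 − 1/d)·H(r) ≥ 0 for every r > 0; that is, P satisfies the generalized McCann condition GMC(m, d). -/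
open Set MeasureTheory

/-- A sufficient condition for the generalized McCann condition `GMC(m,d)`:
if `m` is a smooth mobility on `(0,∞)`, `P` is a smooth pressure with
`P'·m'` integrable near `0`, and `r ↦ m(r)^{1/d}·P'(r)` is strictly positive
and nondecreasing on `(0,∞)`, then `P'(r)·m(r) ≥ (1 − 1/d)·H(r) ≥ 0` for every
`r > 0`, where `H(r) = ∫₀^r P'·m'`. -/
theorem stmt_8 (d : ℕ) (hd : 1 ≤ d) (m : ℝ → ℝ)
    (hm_cont : ContinuousOn m (Ici 0)) (hm_conc : ConcaveOn ℝ (Ici 0) m)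
    (hm_pos : ∀ r : ℝ, 0 < r → 0 < m r) (hm_C1 : ContDiffOn ℝ 1 m (Ioi 0))
    (P : ℝ → ℝ) (hP_cont : ContinuousOn P (Ici 0)) (hP0 : P 0 = 0)
    (hP_C2 : ContDiffOn ℝ 2 P (Ioi 0))
    (hint : ∃ ε : ℝ, 0 < ε ∧
      IntegrableOn (fun z => deriv P z * deriv m z) (Ioc 0 ε))
    (hcond_pos : ∀ r : ℝ, 0 < r → 0 < m r ^ ((1:ℝ) / d) * deriv P r)
    (hcond_mono : MonotoneOn (fun r => m r ^ ((1:ℝ) / d) * deriv P r) (Ioi 0)) :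
    ∀ r : ℝ, 0 < r →
      deriv P r * m r ≥ (1 - 1 / (d : ℝ)) * ∫ z in Ioc 0 r, deriv P z * deriv m z ∧
      0 ≤ ∫ z in Ioc 0 r, deriv P z * deriv m z := by
  have hdm : ∀ z : ℝ, 0 < z → HasDerivAt m (deriv m z) z := fun z hz =>
    ((hm_C1.differentiableOn one_ne_zero).differentiableAt (Ioi_mem_nhds hz)).hasDerivAt
  have hm' : ∀ z : ℝ, 0 < z → 0 ≤ deriv m z := by
    intro z hz
    by_contra hneg
    push Not at hneg
    have hmz := hm_pos z hz
    have hq : 0 < m z / (-deriv m z) := div_pos hmz (by linarith)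
    have hy : z < z + m z / (-deriv m z) := by linarith
    have h1 := hm_conc.slope_le_of_hasDerivAt (x := z) (y := z + m z / (-deriv m z))
      (mem_Ici.2 hz.le) (mem_Ici.2 (by linarith)) hy (hdm z hz)
    rw [slope_def_field, div_le_iff₀ (by linarith)] at h1
    have h2 := hm_pos (z + m z / (-deriv m z)) (by linarith)
    have h3 : deriv m z * (z + m z / (-deriv m z) - z) = - m z := by
      have : deriv m z ≠ 0 := hneg.ne
      field_simp
      ring
    linarith
  have hm0 : ∀ z : ℝ, 0 ≤ z → 0 ≤ m z := by
    intro z hz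
    rcases hz.eq_or_lt with h | h
    · subst h
      have ht : Filter.Tendsto m (nhdsWithin 0 (Ioi 0)) (nhds (m 0)) :=
        (hm_cont 0 self_mem_Ici).mono_left (nhdsWithin_mono _ Ioi_subset_Ici_self)
      exact ge_of_tendsto ht (by
        filter_upwards [self_mem_nhdsWithin] with x hx using (hm_pos x hx).le)
    · exact (hm_pos z h).le
  have hP' : ∀ z : ℝ, 0 < z → 0 < deriv P z := fun z hz =>
    pos_of_mul_pos_right (hcond_pos z hz) (Real.rpow_nonneg (hm0 z hz.le) _)
  have hd1 : (1 : ℝ) ≤ d := by exact_mod_cast hd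
  set α : ℝ := 1 - 1 / (d : ℝ) with hα
  have hα0 : 0 ≤ α := by
    have : 1 / (d : ℝ) ≤ 1 := by rw [div_le_one (by linarith)]; exact hd1
    linarith
  intro r hr
  refine ⟨?_, setIntegral_nonneg measurableSet_Ioc fun z hz =>
    mul_nonneg (hP' z hz.1).le (hm' z hz.1)⟩
  set F' : ℝ → ℝ := fun z => deriv m z * α * m z ^ (α - 1) with hF'
  have hFc : ContinuousOn (fun z => m z ^ α) (Icc 0 r) :=
    (hm_cont.mono Icc_subset_Ici_self).rpow_const fun _ _ => Or.inr hα0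
  have hFd : ∀ z ∈ Ioo 0 r, HasDerivAt (fun z => m z ^ α) (F' z) z := fun z hz =>
    (hdm z hz.1).rpow_const (Or.inl (hm_pos z hz.1).ne')
  have hFn : ∀ z : ℝ, 0 < z → 0 ≤ F' z := fun z hz =>
    mul_nonneg (mul_nonneg (hm' z hz) hα0) (Real.rpow_nonneg (hm0 z hz.le) _)
  have hFi : IntegrableOn F' (Ioc 0 r) :=
    intervalIntegral.integrableOn_deriv_of_nonneg hFc hFd fun z hz => hFn z hz.1
  have hFint : ∫ z in Ioc 0 r, F' z = m r ^ α - m 0 ^ α := by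
    rw [← intervalIntegral.integral_of_le hr.le]
    exact intervalIntegral.integral_eq_sub_of_hasDerivAt_of_le hr.le hFc hFd
      ((intervalIntegrable_iff_integrableOn_Ioc_of_le hr.le).2 hFi)
  set G : ℝ := m r ^ ((1:ℝ) / d) * deriv P r with hG
  have hGpos : 0 < G := hcond_pos r hr
  have key : ∫ z in Ioc 0 r, α * (deriv P z * deriv m z) ≤ ∫ z in Ioc 0 r, G * F' z := by
    refine integral_mono_of_nonneg ?_ (hFi.const_mul G) ?_
    · filter_upwards [ae_restrict_mem measurableSet_Ioc] with z hz
      exact mul_nonneg hα0 (mul_nonneg (hP' z hz.1).le (hm' z hz.1))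
    · filter_upwards [ae_restrict_mem measurableSet_Ioc] with z hz
      have hmz := hm_pos z hz.1
      have hmon : m z ^ ((1:ℝ) / d) * deriv P z ≤ G := hcond_mono hz.1 hr hz.2
      have h1 : m z ^ (α - 1) * m z ^ ((1:ℝ) / d) = 1 := by
        rw [← Real.rpow_add hmz, hα]
        simp
      calc α * (deriv P z * deriv m z)
          = (m z ^ ((1:ℝ) / d) * deriv P z) * F' z := by
            simp only [hF']
            linear_combination (-(α * deriv P z * deriv m z)) * h1
        _ ≤ G * F' z := mul_le_mul_of_nonneg_right hmon (hFn z hz.1)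
  rw [integral_const_mul, integral_const_mul, hFint] at key
  have h2 : G * m r ^ α = deriv P r * m r := by
    have h3 : m r ^ ((1:ℝ) / d) * m r ^ α = m r := by
      rw [← Real.rpow_add (hm_pos r hr), hα]
      simp
    rw [hG]
    linear_combination deriv P r * h3
  have h4 : 0 ≤ G * m 0 ^ α := mul_nonneg hGpos.le (Real.rpow_nonneg (hm0 0 le_rfl) _)
  rw [mul_sub] at key
  linarith
end

section
/- Let κ ∈ (0,1), r₀ > 0, a ≥ 0. Let m : [r₀,∞) → (0,∞) be nondecreasing and locally absolutely continuous with derivative m' ≥ 0, and let f : [r₀,∞) → [0,∞) be locally integrable and satisfy f(r) ≥ κ·( a + ∫_{r₀}^r f(z)·(m'(z)/m(z)) dz ) for almost every r ≥ r₀. Then f(r) ≥ κ·a·( m(r)/m(r₀) )^κ for almost every r ≥ r₀. In particular, if d > 1, m is a concave nondecreasing mobility, P is a pressure with H(r) := ∫₀^r P'·m' satisfying P'(r)·m(r) ≥ (1 − 1/d)·H(r) a.e. on (0,∞), then for every r₀ > 0, P'(r) ≥ c₀·m(r)^{−1/d} for almost every r ≥ r₀, with c₀ := (1 − 1/d)·H(r₀)·m(r₀)^{1/d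 − 1}. -/
open Set MeasureTheory

lemma ac_comp_aux {φ g : ℝ → ℝ} {a b : ℝ} {s : Set ℝ} {K : NNReal}
    (hφ : LipschitzOnWith K φ s) (hg : AbsolutelyContinuousOnInterval g a b)
    (hs : ∀ x ∈ uIcc a b, g x ∈ s) :
    AbsolutelyContinuousOnInterval (fun x => φ (g x)) a b := by
  rw [absolutelyContinuousOnInterval_iff] at hg ⊢
  intro ε hε
  obtain ⟨δ, hδ, h⟩ := hg (ε / (K + 1)) (by positivity)
  refine ⟨δ, hδ, fun E hE hEd => ?_⟩
  have h1 := h E hE hEd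
  calc ∑ i ∈ Finset.range E.1, dist (φ (g (E.2 i).1)) (φ (g (E.2 i).2))
      ≤ ∑ i ∈ Finset.range E.1, (K + 1 : ℝ) * dist (g (E.2 i).1) (g (E.2 i).2) := by
        apply Finset.sum_le_sum
        intro i hi
        have h2 := hφ.dist_le_mul _ (hs _ (hE.1 i hi).1) _ (hs _ (hE.1 i hi).2)
        have h3 : (0:ℝ) ≤ dist (g (E.2 i).1) (g (E.2 i).2) := dist_nonneg
        linarith
    _ = (K + 1 : ℝ) * ∑ i ∈ Finset.range E.1, dist (g (E.2 i).1) (g (E.2 i).2) := by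
        rw [Finset.mul_sum]
    _ < (K + 1 : ℝ) * (ε / (K + 1)) := by
        apply mul_lt_mul_of_pos_left h1; positivity
    _ = ε := by field_simp

lemma core_aux (κ r R a : ℝ) (hrR : r ≤ R) (m m' g : ℝ → ℝ)
    (hmono : MonotoneOn m (Icc r R)) (hpos : 0 < m r)
    (hac : AbsolutelyContinuousOnInterval m r R)
    (hder : ∀ᵐ x, x ∈ Icc r R → HasDerivAt m (m' x) x)
    (hg : IntervalIntegrable g volume r R)
    (hineq : ∀ᵐ x, x ∈ Icc r R → κ * (a + ∫ z in r..x, g z) * (m' x / m x) ≤ g x) :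
    a * (m R / m r) ^ κ ≤ a + ∫ z in r..R, g z := by
  have hu : uIcc r R = Icc r R := uIcc_of_le hrR
  have hmem : ∀ x ∈ uIcc r R, m x ∈ Icc (m r) (m R) := by
    intro x hx
    rw [hu] at hx
    exact ⟨hmono (left_mem_Icc.2 hrR) hx hx.1, hmono hx (right_mem_Icc.2 hrR) hx.2⟩
  have hposx : ∀ x ∈ Icc r R, 0 < m x := fun x hx =>
    hpos.trans_le (hmem x (by rw [hu]; exact hx)).1
  have hcd : ContDiffOn ℝ 1 (fun y : ℝ => y ^ (-κ)) (Icc (m r) (m R)) := by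
    intro y hy
    exact (Real.contDiffAt_rpow_const_of_ne (hpos.trans_le hy.1).ne').contDiffWithinAt
  obtain ⟨K, hK⟩ := hcd.exists_lipschitzOnWith one_ne_zero (convex_Icc _ _) isCompact_Icc
  have hac2 : AbsolutelyContinuousOnInterval (fun x => (m x) ^ (-κ)) r R :=
    ac_comp_aux (φ := fun y : ℝ => y ^ (-κ)) (g := m) hK hac hmem
  have hac1 : AbsolutelyContinuousOnInterval (fun x => a + ∫ z in r..x, g z) r R := by
    have h0 : AbsolutelyContinuousOnInterval (fun _ : ℝ => a) r R :=
      (LipschitzWith.const a).lipschitzOnWith.absolutelyContinuousOnInterval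
    exact h0.fun_add (hg.absolutelyContinuousOnInterval_intervalIntegral left_mem_uIcc)
  have hac3 : AbsolutelyContinuousOnInterval
      (fun x => (a + ∫ z in r..x, g z) * (m x) ^ (-κ)) r R := hac1.fun_mul hac2
  have hG := hac3.integral_deriv_eq_sub
  have hnn : 0 ≤ ∫ x in r..R, deriv (fun x => (a + ∫ z in r..x, g z) * (m x) ^ (-κ)) x := by
    apply intervalIntegral.integral_nonneg_of_ae_restrict hrR
    rw [Filter.EventuallyLE, ae_restrict_iff' measurableSet_Icc]
    have hg' := hg.ae_hasDerivAt_integral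
    rw [hu] at hg'
    simp only [Pi.zero_apply]
    refine ((hder.and hineq).and hg').mono ?_
    rintro x ⟨⟨h1, h2⟩, h3⟩ hx
    have h1 := h1 hx
    have h2 := h2 hx
    have h3 := h3 hx r (left_mem_Icc.2 hrR)
    have hp := hposx x hx
    have hd1 : HasDerivAt (fun x => a + ∫ z in r..x, g z) (g x) x := h3.const_add a
    have hd2 : HasDerivAt (fun x => (m x) ^ (-κ)) (m' x * -κ * m x ^ (-κ - 1)) x :=
      h1.rpow_const (p := -κ) (Or.inl hp.ne')
    rw [(hd1.fun_mul hd2).deriv, Real.rpow_sub_one hp.ne']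
    have hq : 0 < m x ^ (-κ) := Real.rpow_pos_of_pos hp _
    have : g x * m x ^ (-κ) + (a + ∫ z in r..x, g z) * (m' x * -κ * (m x ^ (-κ) / m x))
        = (g x - κ * (a + ∫ z in r..x, g z) * (m' x / m x)) * m x ^ (-κ) := by
      field_simp; ring
    rw [this]
    exact mul_nonneg (by linarith) hq.le
  rw [hG] at hnn
  simp only [intervalIntegral.integral_same, add_zero] at hnn
  have hpR := hposx R (right_mem_Icc.2 hrR)
  rw [Real.rpow_neg hpos.le, Real.rpow_neg hpR.le] at hnn
  rw [Real.div_rpow hpR.le hpos.le]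
  have h1 : 0 < m r ^ κ := Real.rpow_pos_of_pos hpos _
  have h2 : 0 < m R ^ κ := Real.rpow_pos_of_pos hpR _
  rw [sub_nonneg, ← div_eq_mul_inv, ← div_eq_mul_inv, le_div_iff₀ h2] at hnn
  calc _ = a / m r ^ κ * m R ^ κ := by ring
    _ ≤ _ := hnn


/-- A Gronwall-type lower bound and its application: if `f ≥ 0` satisfies
`f(r) ≥ κ·(a + ∫_{r₀}^r f·(m'/m))` a.e. on `[r₀,∞)` for a nondecreasing,
locally absolutely continuous, positive `m`, then
`f(r) ≥ κ·a·(m(r)/m(r₀))^κ` a.e.  In particular, for `d > 1`, a concave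
nondecreasing mobility `mm` and a pressure density `p ≥ 0` satisfying the
generalized McCann condition `p(r)·mm(r) ≥ (1 − 1/d)·∫₀^r p·mm'` a.e., one has
`p(r) ≥ c₀·mm(r)^{-1/d}` a.e. on `[r₁,∞)` for every `r₁ > 0`, with
`c₀ = (1 − 1/d)·H(r₁)·mm(r₁)^{1/d − 1}`. -/
theorem stmt_10 (κ r₀ a : ℝ) (hκ0 : 0 < κ) (hκ1 : κ < 1) (hr₀ : 0 < r₀)
    (ha : 0 ≤ a) (m m' f : ℝ → ℝ)
    (hm_mono : MonotoneOn m (Ici r₀)) (hm_pos : ∀ r ∈ Ici r₀, 0 < m r)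
    (hm'_nonneg : ∀ᵐ r ∂(volume.restrict (Ioi r₀)), 0 ≤ m' r)
    (hm'_loc : ∀ R : ℝ, r₀ ≤ R → IntegrableOn m' (Ioc r₀ R))
    (hm_rep : ∀ r : ℝ, r₀ ≤ r → m r = m r₀ + ∫ z in Ioc r₀ r, m' z)
    (hf_nonneg : ∀ r : ℝ, r₀ ≤ r → 0 ≤ f r)
    (hf_loc : ∀ R : ℝ, r₀ ≤ R → IntegrableOn f (Ioc r₀ R))
    (hprod_loc : ∀ R : ℝ, r₀ ≤ R →
      IntegrableOn (fun z => f z * (m' z / m z)) (Ioc r₀ R))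
    (hf_ineq : ∀ᵐ r ∂(volume.restrict (Ici r₀)),
      f r ≥ κ * (a + ∫ z in Ioc r₀ r, f z * (m' z / m z))) :
    (∀ᵐ r ∂(volume.restrict (Ici r₀)),
      f r ≥ κ * a * (m r / m r₀) ^ κ) ∧
    (∀ d : ℕ, 1 < d → ∀ mm mm' p : ℝ → ℝ,
      ContinuousOn mm (Ici 0) → ConcaveOn ℝ (Ici 0) mm →
      (∀ r : ℝ, 0 < r → 0 < mm r) → MonotoneOn mm (Ici 0) →
      (∀ᵐ r ∂(volume.restrict (Ioi (0:ℝ))),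
        HasDerivAt mm (mm' r) r ∧ 0 ≤ mm' r) →
      (∀ᵐ r ∂(volume.restrict (Ioi (0:ℝ))), 0 ≤ p r) →
      (∀ R : ℝ, 0 < R → IntegrableOn (fun z => p z * mm' z) (Ioc 0 R)) →
      (∀ᵐ r ∂(volume.restrict (Ioi (0:ℝ))),
        p r * mm r ≥ (1 - 1 / (d : ℝ)) * ∫ z in Ioc 0 r, p z * mm' z) →
      ∀ r₁ : ℝ, 0 < r₁ →
        ∀ᵐ r ∂(volume.restrict (Ici r₁)),
          p r ≥ ((1 - 1 / (d : ℝ)) * (∫ z in Ioc 0 r₁, p z * mm' z) *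
            mm r₁ ^ ((1:ℝ) / d - 1)) * mm r ^ (-(1:ℝ) / d)) := by
  constructor
  · rw [ae_restrict_iff' measurableSet_Ici] at hf_ineq ⊢
    rw [ae_restrict_iff' measurableSet_Ioi] at hm'_nonneg
    filter_upwards [hf_ineq] with R hR hRm
    have hrR : r₀ ≤ R := hRm
    have hR := hR hRm
    have hm'i : IntervalIntegrable m' volume r₀ R :=
      (intervalIntegrable_iff_integrableOn_Ioc_of_le hrR).2 (hm'_loc R hrR)
    have hgi : IntervalIntegrable (fun z => f z * (m' z / m z)) volume r₀ R :=
      (intervalIntegrable_iff_integrableOn_Ioc_of_le hrR).2 (hprod_loc R hrR)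
    have hrep : ∀ x, r₀ ≤ x → m x = m r₀ + ∫ z in r₀..x, m' z := by
      intro x hx
      rw [intervalIntegral.integral_of_le hx]
      exact hm_rep x hx
    have key := core_aux κ r₀ R a hrR (fun x => m r₀ + ∫ z in r₀..x, m' z) m'
      (fun z => f z * (m' z / m z)) ?_ ?_ ?_ ?_ hgi ?_
    · simp only [intervalIntegral.integral_same, add_zero] at key
      rw [← hrep R hrR, intervalIntegral.integral_of_le hrR] at key
      have := mul_le_mul_of_nonneg_left key hκ0.le
      calc _ ≥ _ := hR
        _ ≥ κ * (a * (m R / m r₀) ^ κ) := this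
        _ = _ := by ring
    · intro x hx y hy hxy
      simp only
      rw [← hrep x hx.1, ← hrep y hy.1]
      exact hm_mono hx.1 hy.1 hxy
    · simpa using hm_pos r₀ self_mem_Ici
    · have h0 : AbsolutelyContinuousOnInterval (fun _ : ℝ => m r₀) r₀ R :=
        (LipschitzWith.const (m r₀)).lipschitzOnWith.absolutelyContinuousOnInterval
      exact h0.fun_add (hm'i.absolutelyContinuousOnInterval_intervalIntegral left_mem_uIcc)
    · filter_upwards [hm'i.ae_hasDerivAt_integral] with x h hx
      exact (h (by rwa [uIcc_of_le hrR]) r₀ left_mem_uIcc).const_add _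
    · have hne : ∀ᵐ x : ℝ, x ≠ r₀ := by simp [ae_iff, measure_singleton]
      filter_upwards [hf_ineq, hm'_nonneg, hne] with x h1 h2 h3 hx
      have h1 := h1 hx.1
      have h2 := h2 (lt_of_le_of_ne hx.1 (Ne.symm h3))
      have hp := hm_pos x hx.1
      rw [← hrep x hx.1, intervalIntegral.integral_of_le hx.1]
      exact mul_le_mul_of_nonneg_right h1 (by positivity)
  · intro d hd mm mm' p hcont hconc hpos hmono hder hp hint hineq r₁ hr₁
    set k : ℝ := 1 - 1 / (d : ℝ) with hk
    have hd' : (1:ℝ) < d := by exact_mod_cast hd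
    have hk0 : 0 ≤ k := by
      rw [hk, sub_nonneg, div_le_one (by linarith)]; exact hd'.le
    rw [ae_restrict_iff' measurableSet_Ioi] at hder hp hineq
    rw [ae_restrict_iff' measurableSet_Ici]
    filter_upwards [hineq] with R hR hRm
    have hrR : r₁ ≤ R := hRm
    have hR0 : 0 < R := hr₁.trans_le hrR
    have hR := hR hR0
    have hsplit : ∀ x, r₁ ≤ x → (∫ z in Ioc 0 r₁, p z * mm' z) + ∫ z in r₁..x, p z * mm' z
        = ∫ z in Ioc 0 x, p z * mm' z := by
      intro x hx
      have hx0 : 0 < x := hr₁.trans_le hx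
      rw [← intervalIntegral.integral_of_le hr₁.le, ← intervalIntegral.integral_of_le hx0.le]
      apply intervalIntegral.integral_add_adjacent_intervals
      · exact (intervalIntegrable_iff_integrableOn_Ioc_of_le hr₁.le).2 (hint _ hr₁)
      · exact (intervalIntegrable_iff_integrableOn_Ioc_of_le hx).2
          ((hint _ hx0).mono_set (Ioc_subset_Ioc_left hr₁.le))
    have hac : AbsolutelyContinuousOnInterval mm r₁ R := by
      have hl : LocallyLipschitzOn (Ioi 0) mm :=
        ((hconc.subset Ioi_subset_Ici_self (convex_Ioi 0)).locallyLipschitzOn_iff_continuousOn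
          isOpen_Ioi).2 (hcont.mono Ioi_subset_Ici_self)
      have hsub : uIcc r₁ R ⊆ Ioi 0 := by
        rw [uIcc_of_le hrR]; exact fun x hx => hr₁.trans_le hx.1
      obtain ⟨K, hK⟩ := (hl.mono hsub).exists_lipschitzOnWith_of_compact isCompact_uIcc
      exact hK.absolutelyContinuousOnInterval
    have key := core_aux k r₁ R (∫ z in Ioc 0 r₁, p z * mm' z) hrR mm mm'
      (fun z => p z * mm' z)
      (hmono.mono fun x hx => hr₁.le.trans hx.1) (hpos _ hr₁) hac ?_
      ((intervalIntegrable_iff_integrableOn_Ioc_of_le hrR).2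
          ((hint _ hR0).mono_set (Ioc_subset_Ioc_left hr₁.le))) ?_
    · rw [hsplit R hrR] at key
      have hpR := hpos R hR0
      have hp1 := hpos _ hr₁
      have h1 := (mul_le_mul_of_nonneg_left key hk0).trans hR
      rw [Real.div_rpow hpR.le hp1.le] at h1
      have e1 : (1:ℝ) / d - 1 = -k := by rw [hk]; ring
      have e2 : -(1:ℝ) / d = k - 1 := by rw [hk]; ring
      rw [e1, e2, Real.rpow_neg hp1.le, Real.rpow_sub_one hpR.ne']
      rw [← div_le_iff₀ hpR] at h1
      refine le_trans (le_of_eq ?_) h1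
      ring
    · filter_upwards [hder] with x h hx
      exact (h (hr₁.trans_le hx.1)).1
    · filter_upwards [hder, hineq] with x h1 h2 hx
      have hx0 : 0 < x := hr₁.trans_le hx.1
      have h1 := (h1 hx0).2
      have h2 := h2 hx0
      have hpx := hpos x hx0
      rw [hsplit x hx.1]
      have := mul_le_mul_of_nonneg_right h2 (div_nonneg h1 hpx.le)
      refine this.trans (le_of_eq ?_)
      field_simp
end

section
/- Let d ≥ 1 be an integer, M ∈ (0,∞], m a mobility on [0,M), and let P : [0,M) → ℝ be nondecreasing, locally absolutely continuous, with P(0) = 0 and P'·m' locally integrable on [0,M), satisfying the generalized McCann condition: for some H₀ ≥ 0 and H(r) := H₀ + ∫₀^r P'(z)·m'(z) dz one has P'(r)·m(r) ≥ (1 − 1/d)·H(r) ≥ 0 for almost every r ∈ (0,M). Fix 0 < M' < M'' < M. Then there exist sequences (P_n) and (m_n) of functions on [0, M''] such that: (i) P_n ≥ P on [0,M''] and each P_n is strictly increasing; (ii) m_n ≥ m on [0,M''] and each m_n is concave; (iii) the restrictions of P_n and m_n to [M', M''] are C^∞; (iv) for each n there is H_{0,n} ≥ 0 such that, with H_n(r)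 := H_{0,n} + ∫₀^r P_n'(z)·m_n'(z) dz, one has P_n'(r)·m_n(r) ≥ (1 − 1/d)·H_n(r) ≥ 0 for almost every r ∈ (0, M''); (v) P_n → P and m_n → m uniformly on [M', M''] as n → ∞. Moreover, if P' is integrable in a right neighborhood of 0, one can take M' = 0. -/
open Set MeasureTheory ENNReal
open scoped ContDiff

lemma aux_prim {b : ℝ} {f : ℝ → ℝ} (hf : ContinuousOn f (Icc 0 b)) {x : ℝ}
    (hx : x ∈ Icc 0 b) :
    HasDerivWithinAt (fun r => ∫ z in (0:ℝ)..r, f z) (f x) (Icc 0 b) x := by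
  have hi : IntervalIntegrable f volume 0 x :=
    (hf.mono (by rw [uIcc_of_le hx.1]; exact Icc_subset_Icc le_rfl hx.2)).intervalIntegrable
  have : Fact (x ∈ Icc 0 b) := ⟨hx⟩
  exact intervalIntegral.integral_hasDerivWithinAt_right hi
    (hf.stronglyMeasurableAtFilter_nhdsWithin measurableSet_Icc x) (hf x hx)

lemma aux_prim_smooth {b : ℝ} (hb : 0 < b) {f : ℝ → ℝ} (hf : ContDiffOn ℝ ∞ f (Icc 0 b)) :
    ContDiffOn ℝ ∞ (fun r => ∫ z in (0:ℝ)..r, f z) (Icc 0 b) := by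
  rw [contDiffOn_infty_iff_derivWithin (uniqueDiffOn_Icc hb)]
  refine ⟨fun x hx => (aux_prim hf.continuousOn hx).differentiableWithinAt, ?_⟩
  refine hf.congr fun x hx => ?_
  exact (aux_prim hf.continuousOn hx).derivWithin (uniqueDiffOn_Icc hb x hx)

lemma aux_cmp {b : ℝ} {f h : ℝ → ℝ} (hf : IntervalIntegrable f volume 0 b)
    (hh : IntervalIntegrable h volume 0 b) {r : ℝ} (hr : r ∈ Icc 0 b) :
    |(∫ z in (0:ℝ)..r, f z) - ∫ z in (0:ℝ)..r, h z| ≤ ∫ z in (0:ℝ)..b, |f z - h z| := by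
  have hs : uIcc 0 r ⊆ uIcc 0 b := by
    rw [uIcc_of_le hr.1, uIcc_of_le (hr.1.trans hr.2)]; exact Icc_subset_Icc le_rfl hr.2
  have hf' := hf.mono_set hs
  have hh' := hh.mono_set hs
  rw [← intervalIntegral.integral_sub hf' hh']
  refine (intervalIntegral.abs_integral_le_integral_abs hr.1).trans ?_
  exact intervalIntegral.integral_mono_interval le_rfl hr.1 hr.2
    (Filter.Eventually.of_forall fun _ => abs_nonneg _) (hf.sub hh).abs

lemma aux_L1 {b : ℝ} (hb : 0 < b) {qn An : ℕ → ℝ → ℝ} {q A : ℝ → ℝ} {C : ℝ}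
    (hqn : ∀ n, IntervalIntegrable (qn n) volume 0 b) (hq : IntervalIntegrable q volume 0 b)
    (hqt : Filter.Tendsto (fun n => ∫ z in (0:ℝ)..b, |qn n z - q z|) Filter.atTop (nhds 0))
    (hAm : ∀ n, AEStronglyMeasurable (An n) (volume.restrict (Ioc 0 b)))
    (hAb : ∀ n, ∀ z ∈ Icc 0 b, |An n z| ≤ C)
    (hAt : ∀ᵐ z ∂(volume.restrict (Ioc 0 b)), Filter.Tendsto (fun n => An n z) Filter.atTop (nhds (A z))) :
    IntervalIntegrable (fun z => q z * A z) volume 0 b ∧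
    (∀ n, IntervalIntegrable (fun z => qn n z * An n z) volume 0 b) ∧
    Filter.Tendsto (fun n => ∫ z in (0:ℝ)..b, |qn n z * An n z - q z * A z|) Filter.atTop (nhds 0) := by
  have hAmm : AEStronglyMeasurable A (volume.restrict (Ioc 0 b)) :=
    aestronglyMeasurable_of_tendsto_ae _ hAm hAt
  have hAbb : ∀ n, ∀ᵐ z ∂(volume.restrict (Ioc 0 b)), ‖An n z‖ ≤ C := fun n => by
    filter_upwards [ae_restrict_mem measurableSet_Ioc] with z hz using hAb n z ⟨hz.1.le, hz.2⟩
  have hAbound : ∀ᵐ z ∂(volume.restrict (Ioc 0 b)), ‖A z‖ ≤ C := by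
    filter_upwards [hAt, ae_all_iff.2 hAbb] with z hz hz'
    exact le_of_tendsto hz.norm (Filter.Eventually.of_forall hz')
  have hqn' : ∀ n, Integrable (qn n) (volume.restrict (Ioc 0 b)) := fun n =>
    (intervalIntegrable_iff_integrableOn_Ioc_of_le hb.le).1 (hqn n)
  have hq' : Integrable q (volume.restrict (Ioc 0 b)) :=
    (intervalIntegrable_iff_integrableOn_Ioc_of_le hb.le).1 hq
  have I1 : Integrable (fun z => q z * A z) (volume.restrict (Ioc 0 b)) :=
    hq'.mul_bdd hAmm hAbound
  have I2 : ∀ n, Integrable (fun z => qn n z * An n z) (volume.restrict (Ioc 0 b)) := fun n =>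
    (hqn' n).mul_bdd (hAm n) (hAbb n)
  have I3 : ∀ n, Integrable (fun z => q z * An n z) (volume.restrict (Ioc 0 b)) := fun n =>
    hq'.mul_bdd (hAm n) (hAbb n)
  refine ⟨(intervalIntegrable_iff_integrableOn_Ioc_of_le hb.le).2 I1,
    fun n => (intervalIntegrable_iff_integrableOn_Ioc_of_le hb.le).2 (I2 n), ?_⟩
  simp only [intervalIntegral.integral_of_le hb.le] at hqt ⊢
  have T2 : Filter.Tendsto (fun n => ∫ z in Ioc 0 b, |q z * An n z - q z * A z|) Filter.atTop (nhds 0) := by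
    have := tendsto_integral_of_dominated_convergence (μ := volume.restrict (Ioc 0 b))
      (F := fun n z => |q z * An n z - q z * A z|) (f := fun _ => (0:ℝ)) (fun z => |q z| * (2 * C))
      (fun n => ((I3 n).sub I1).abs.aestronglyMeasurable) (hq'.abs.mul_const _)
      (fun n => by
        filter_upwards [hAbb n, hAbound] with z h1 h2
        rw [← mul_sub, Real.norm_eq_abs, abs_abs, abs_mul]
        refine mul_le_mul_of_nonneg_left ?_ (abs_nonneg _)
        have := norm_sub_le (An n z) (A z)
        rw [Real.norm_eq_abs] at this
        linarith)
      (by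
        filter_upwards [hAt] with z hz
        have : Filter.Tendsto (fun n => |q z * An n z - q z * A z|) Filter.atTop (nhds |q z * A z - q z * A z|) :=
          ((hz.const_mul (q z)).sub_const _).abs
        simpa using this)
    simpa using this
  have T3 := (hqt.mul_const C).add T2
  simp only [zero_mul, add_zero] at T3
  refine squeeze_zero (fun n => integral_nonneg fun z => abs_nonneg _) (fun n => ?_) T3
  have J1 : Integrable (fun z => |qn n z - q z| * C) (volume.restrict (Ioc 0 b)) :=
    ((hqn' n).sub hq').abs.mul_const _
  have J2 : Integrable (fun z => |q z * An n z - q z * A z|) (volume.restrict (Ioc 0 b)) :=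
    ((I3 n).sub I1).abs
  rw [← integral_mul_const, ← integral_add J1 J2]
  refine integral_mono_ae ((I2 n).sub I1).abs (J1.add J2) ?_
  filter_upwards [hAbb n] with z h1
  have e : qn n z * An n z - q z * A z = (qn n z - q z) * An n z + (q z * An n z - q z * A z) := by ring
  simp only [Pi.sub_apply, e]
  refine (abs_add_le _ _).trans ?_
  rw [abs_mul]
  gcongr
  exact h1

lemma aux_q {b : ℝ} (hb : 0 < b) {q : ℝ → ℝ} (hq : IntervalIntegrable q volume 0 b)
    (h0 : ∀ᵐ z ∂(volume.restrict (Ioc 0 b)), 0 ≤ q z) :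
    ∃ qn : ℕ → ℝ → ℝ, (∀ n, ContDiff ℝ ∞ (qn n)) ∧ (∀ n x, 0 < qn n x) ∧
    Filter.Tendsto (fun n => ∫ z in (0:ℝ)..b, |qn n z - q z|) Filter.atTop (nhds 0) := by
  have hq' : Integrable q (volume.restrict (Ioc 0 b)) :=
    (intervalIntegrable_iff_integrableOn_Ioc_of_le hb.le).1 hq
  have key : ∀ n : ℕ, ∃ f : ℝ → ℝ, ContDiff ℝ ∞ f ∧ (∀ x, 0 < f x) ∧
      ∫ z in (0:ℝ)..b, |f z - q z| ≤ (1 + 2 * b) * (1 / ((n:ℝ) + 1)) := by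
    intro n
    set ε : ℝ := 1 / ((n:ℝ) + 1) with hε
    have hε0 : 0 < ε := by positivity
    obtain ⟨g0, -, hg0, hg0c, hg0i⟩ := hq'.exists_hasCompactSupport_integral_sub_le hε0
    have hg1c : Continuous (fun x => max (g0 x) 0) := hg0c.max continuous_const
    obtain ⟨g, hg, hgd, -⟩ := hg1c.exists_contDiff_approx ⊤ (ε := fun _ ↦ ε) (by fun_prop)
      (by intro; positivity)
    have hgd' : ∀ x, |g x - max (g0 x) 0| < ε := hgd
    refine ⟨fun x => g x + ε, hg.add contDiff_const, fun x => ?_, ?_⟩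
    · have := (abs_lt.1 (hgd' x)).1
      have := le_max_right (g0 x) 0
      linarith
    · rw [intervalIntegral.integral_of_le hb.le]
      have hc : Integrable (fun x => g x + ε) (volume.restrict (Ioc 0 b)) :=
        ((hg.continuous.add continuous_const).integrableOn_Icc (a := 0) (b := b)).mono_set Ioc_subset_Icc_self
      have e : (1 + 2 * b) * ε ≥ (∫ z in Ioc 0 b, ‖q z - g0 z‖) + ∫ z in Ioc 0 b, 2 * ε := by
        have e2 : ∫ z in Ioc 0 b, 2 * ε = b * (2 * ε) := by simp [hb.le]
        rw [e2]
        linarith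
      refine le_trans ?_ e
      have J1 : Integrable (fun z => ‖q z - g0 z‖) (volume.restrict (Ioc 0 b)) := (hq'.sub hg0i).norm
      have J2 : Integrable (fun _ : ℝ => 2 * ε) (volume.restrict (Ioc 0 b)) := integrable_const _
      rw [← integral_add J1 J2]
      refine integral_mono_ae (hc.sub hq').abs (J1.add J2) ?_
      filter_upwards [h0] with z hz
      simp only [Pi.sub_apply, Pi.add_apply, Real.norm_eq_abs]
      have h1 := abs_lt.1 (hgd' z)
      have h2 : |max (g0 z) 0 - q z| ≤ |q z - g0 z| := by
        have := abs_max_sub_max_le_abs (g0 z) (q z) 0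
        rw [max_eq_left hz, abs_sub_comm (g0 z)] at this
        exact this
      rw [abs_le] at *
      constructor <;> linarith
  choose qn h1 h2 h3 using key
  refine ⟨qn, h1, h2, squeeze_zero (fun n => ?_) h3 ?_⟩
  · exact intervalIntegral.integral_nonneg hb.le fun _ _ => abs_nonneg _
  · simpa using (tendsto_one_div_add_atTop_nhds_zero_nat (𝕜 := ℝ)).const_mul (1 + 2 * b)

open scoped Convolution in
lemma aux_g {g : ℝ → ℝ} (hg : Antitone g) {L : ℝ} (hL : ∀ x, |g x| ≤ L) :
    ∃ gn : ℕ → ℝ → ℝ, (∀ n, ContDiff ℝ ∞ (gn n)) ∧ (∀ n, Antitone (gn n)) ∧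
    (∀ n x, |gn n x| ≤ L) ∧
    ∀ᵐ x, Filter.Tendsto (fun n => gn n x) Filter.atTop (nhds (g x)) := by
  let φ : ℕ → ContDiffBump (0:ℝ) := fun n =>
    ⟨1 / ((n:ℝ) + 1), 2 * (1 / ((n:ℝ) + 1)), by positivity, by
      have : 0 < 1 / ((n:ℝ) + 1) := by positivity
      linarith⟩
  have hgl : LocallyIntegrable g volume := hg.locallyIntegrable
  have hint : ∀ n x, Integrable (fun t => (φ n).normed volume t * g (x - t)) := fun n x => by
    refine (φ n).integrable_normed.mul_bdd (c := L) ?_ (Filter.Eventually.of_forall fun t => hL _)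
    exact (hg.measurable.comp (measurable_const.sub measurable_id)).aestronglyMeasurable
  have hval : ∀ n x, ((φ n).normed volume ⋆[ContinuousLinearMap.lsmul ℝ ℝ, volume] g) x =
      ∫ t, (φ n).normed volume t * g (x - t) := fun n x => rfl
  refine ⟨fun n => (φ n).normed volume ⋆[ContinuousLinearMap.lsmul ℝ ℝ, volume] g, fun n => ?_, fun n => ?_, fun n x => ?_, ?_⟩
  · exact (φ n).hasCompactSupport_normed.contDiff_convolution_left _ (φ n).contDiff_normed hgl
  · intro x y hxy
    simp only [hval]
    refine integral_mono (hint n y) (hint n x) fun t => ?_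
    exact mul_le_mul_of_nonneg_left (hg (by linarith)) ((φ n).nonneg_normed t)
  · simp only [hval]
    have h1 : ∫ t, (φ n).normed volume t * L = L := by
      rw [integral_mul_const, (φ n).integral_normed, one_mul]
    rw [← Real.norm_eq_abs]
    conv_rhs => rw [← h1]
    refine norm_integral_le_of_norm_le ((φ n).integrable_normed.mul_const L) (Filter.Eventually.of_forall fun t => ?_)
    rw [norm_mul, Real.norm_of_nonneg ((φ n).nonneg_normed t)]
    exact mul_le_mul_of_nonneg_left (hL _) ((φ n).nonneg_normed t)
  · refine ContDiffBump.ae_convolution_tendsto_right_of_locallyIntegrable (K := 2) ?_ ?_ hgl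
    · have := (tendsto_one_div_add_atTop_nhds_zero_nat (𝕜 := ℝ)).const_mul 2
      rw [mul_zero] at this
      exact this
    · exact Filter.Eventually.of_forall fun n => le_rfl

lemma aux_smooth {α b m0 K0 P0 : ℝ} (hb : 0 < b) (hα : 0 ≤ α) {q g m K p P : ℝ → ℝ}
    (hq : ContDiff ℝ ∞ q) (hq0 : ∀ x, 0 < q x) (hg : ContDiff ℝ ∞ g) (hga : Antitone g)
    (hm : ∀ r, m r = m0 + ∫ z in (0:ℝ)..r, g z) (hmpos : ∀ r ∈ Icc 0 b, 0 < m r)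
    (hK : ∀ r, K r = K0 + ∫ z in (0:ℝ)..r, q z * (g z * m z ^ (-α)))
    (hK0 : ∀ r ∈ Icc 0 b, 0 ≤ K r)
    (hp : ∀ r, p r = q r + K r * (α * m r ^ (α - 1)))
    (hP : ∀ r, P r = P0 + ∫ z in (0:ℝ)..r, p z) :
    ContinuousOn K (Icc 0 b) ∧ ContinuousOn p (Icc 0 b) ∧ 
    StrictMonoOn P (Icc 0 b) ∧ ConcaveOn ℝ (Icc 0 b) m ∧ ContDiffOn ℝ ∞ P (Icc 0 b) ∧
    ContDiffOn ℝ ∞ m (Icc 0 b) ∧ 0 ≤ m 0 ^ α * K 0 ∧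
    (∀ r ∈ Ioo 0 b, HasDerivAt P (p r) r ∧ HasDerivAt m (g r) r) ∧
    (∀ r ∈ Ioo 0 b, p r * m r ≥ α * (m 0 ^ α * K 0 + ∫ z in Ioc 0 r, p z * g z) ∧
      0 ≤ m 0 ^ α * K 0 + ∫ z in Ioc 0 r, p z * g z) := by
  have hm' : m = fun r => m0 + ∫ z in (0:ℝ)..r, g z := funext hm
  have hK' : K = fun r => K0 + ∫ z in (0:ℝ)..r, q z * (g z * m z ^ (-α)) := funext hK
  have hp' : p = fun r => q r + K r * (α * m r ^ (α - 1)) := funext hp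
  have hP' : P = fun r => P0 + ∫ z in (0:ℝ)..r, p z := funext hP
  have sm : ContDiffOn ℝ ∞ m (Icc 0 b) := by
    rw [hm']; exact contDiffOn_const.add (aux_prim_smooth hb hg.contDiffOn)
  have spow : ∀ β : ℝ, ContDiffOn ℝ ∞ (fun z => m z ^ β) (Icc 0 b) := fun β =>
    sm.rpow_const_of_ne fun x hx => (hmpos x hx).ne'
  have sA : ContDiffOn ℝ ∞ (fun z => q z * (g z * m z ^ (-α))) (Icc 0 b) :=
    hq.contDiffOn.mul (hg.contDiffOn.mul (spow _))
  have sK : ContDiffOn ℝ ∞ K (Icc 0 b) := by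
    rw [hK']; exact contDiffOn_const.add (aux_prim_smooth hb sA)
  have sp : ContDiffOn ℝ ∞ p (Icc 0 b) := by
    rw [hp']; exact hq.contDiffOn.add (sK.mul (contDiffOn_const.mul (spow _)))
  have sP : ContDiffOn ℝ ∞ P (Icc 0 b) := by
    rw [hP']; exact contDiffOn_const.add (aux_prim_smooth hb sp)
  have dm : ∀ x ∈ Icc 0 b, HasDerivWithinAt m (g x) (Icc 0 b) x := fun x hx => by
    rw [hm']; exact (aux_prim hg.continuous.continuousOn hx).const_add _
  have dK : ∀ x ∈ Icc 0 b, HasDerivWithinAt K (q x * (g x * m x ^ (-α))) (Icc 0 b) x := fun x hx => by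
    rw [hK']; exact (aux_prim sA.continuousOn hx).const_add _
  have dP : ∀ x ∈ Icc 0 b, HasDerivWithinAt P (p x) (Icc 0 b) x := fun x hx => by
    rw [hP']; exact (aux_prim sp.continuousOn hx).const_add _
  have ppos : ∀ x ∈ Icc 0 b, 0 < p x := fun x hx => by
    rw [hp]
    have := hq0 x
    have := hK0 x hx
    have := Real.rpow_pos_of_pos (hmpos x hx) (α - 1)
    positivity
  have dAt : ∀ {f : ℝ → ℝ} {f' x : ℝ}, x ∈ Ioo 0 b → HasDerivWithinAt f f' (Icc 0 b) x → HasDerivAt f f' x :=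
    fun hx h => h.hasDerivAt (Icc_mem_nhds hx.1 hx.2)
  have hH : ∀ r ∈ Icc 0 b, m 0 ^ α * K 0 + ∫ z in Ioc 0 r, p z * g z = m r ^ α * K r := by
    intro r hr
    rw [← intervalIntegral.integral_of_le hr.1]
    have hsub : Icc 0 r ⊆ Icc 0 b := Icc_subset_Icc le_rfl hr.2
    have := intervalIntegral.integral_eq_sub_of_hasDerivAt_of_le (f := fun z => m z ^ α * K z)
      (f' := fun z => p z * g z) hr.1
      (((spow α).continuousOn.mul sK.continuousOn).mono hsub) (fun x hx => ?_) ?_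
    · rw [this]; ring
    · have hx' : x ∈ Ioo 0 b := ⟨hx.1, hx.2.trans_le hr.2⟩
      have hxc : x ∈ Icc 0 b := Ioo_subset_Icc_self hx'
      have hmx := hmpos x hxc
      have h := ((dAt hx' (dm x hxc)).rpow_const (p := α) (Or.inl hmx.ne')).mul (dAt hx' (dK x hxc))
      convert! h using 1
      rw [hp]
      have e : m x ^ α * m x ^ (-α) = 1 := by
        rw [← Real.rpow_add hmx]; simp
      linear_combination (-(q x * g x)) * e
    · apply ContinuousOn.intervalIntegrable
      rw [uIcc_of_le hr.1]
      exact (sp.continuousOn.mul hg.continuous.continuousOn).mono hsub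
  refine ⟨sK.continuousOn, sp.continuousOn, ?_, ?_, sP, sm, ?_, ?_, ?_⟩
  · refine strictMonoOn_of_deriv_pos (convex_Icc _ _) sP.continuousOn fun x hx => ?_
    rw [interior_Icc] at hx
    rw [(dAt hx (dP x (Ioo_subset_Icc_self hx))).deriv]
    exact ppos x (Ioo_subset_Icc_self hx)
  · refine AntitoneOn.concaveOn_of_deriv (convex_Icc _ _) sm.continuousOn ?_ ?_
    · exact fun x hx => ((dm x (interior_subset hx)).mono interior_subset).differentiableWithinAt
    · rw [interior_Icc]
      intro x hx y hy hxy
      rw [(dAt hx (dm x (Ioo_subset_Icc_self hx))).deriv, (dAt hy (dm y (Ioo_subset_Icc_self hy))).deriv]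
      exact hga hxy
  · have h0 : (0:ℝ) ∈ Icc 0 b := ⟨le_rfl, hb.le⟩
    exact mul_nonneg (Real.rpow_nonneg (hmpos 0 h0).le _) (hK0 0 h0)
  · exact fun r hr => ⟨dAt hr (dP r (Ioo_subset_Icc_self hr)), dAt hr (dm r (Ioo_subset_Icc_self hr))⟩
  · intro r hr
    have hrc := Ioo_subset_Icc_self hr
    rw [hH r hrc]
    have hmr := hmpos r hrc
    refine ⟨?_, mul_nonneg (Real.rpow_nonneg hmr.le _) (hK0 r hrc)⟩
    have e : m r ^ (α - 1) * m r = m r ^ α := by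
      rw [Real.rpow_sub_one hmr.ne']; field_simp
    have h1 : p r * m r = q r * m r + α * (m r ^ α * K r) := by
      rw [hp, ← e]; ring
    rw [h1]
    have := mul_pos (hq0 r) hmr
    linarith

lemma aux_K {α b m0 H0 L c : ℝ} (hb : 0 < b) {g m p H : ℝ → ℝ}
    (hga : Antitone g) (hL : ∀ x, |g x| ≤ L)
    (hm : ∀ r, m r = m0 + ∫ z in (0:ℝ)..r, g z) (hc : 0 < c) (hmpos : ∀ r ∈ Icc 0 b, c ≤ m r)
    (hpg : IntervalIntegrable (fun z => p z * g z) volume 0 b)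
    (hH : ∀ r, H r = H0 + ∫ z in (0:ℝ)..r, p z * g z) :
    ContinuousOn m (Icc 0 b) ∧ ContinuousOn H (Icc 0 b) ∧ 
    ∀ r ∈ Icc 0 b, H r * m r ^ (-α) = H0 * m0 ^ (-α) +
      ∫ z in (0:ℝ)..r, (p z - H z * m z ^ (-α) * (α * m z ^ (α - 1))) * (g z * m z ^ (-α)) := by
  have hm' : m = fun r => m0 + ∫ z in (0:ℝ)..r, g z := funext hm
  have hH' : H = fun r => H0 + ∫ z in (0:ℝ)..r, p z * g z := funext hH
  have gi : ∀ x y, IntervalIntegrable g volume x y := fun x y => hga.intervalIntegrable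
  have L0 : 0 ≤ L := (abs_nonneg _).trans (hL 0)
  have lipm : LipschitzWith ⟨L, L0⟩ m := by
    refine LipschitzWith.of_dist_le_mul fun x y => ?_
    rw [hm, hm, Real.dist_eq, add_sub_add_left_eq_sub, intervalIntegral.integral_interval_sub_left (gi _ _) (gi _ _)]
    exact intervalIntegral.norm_integral_le_of_norm_le_const (f := g) (C := L) fun z _ => hL z
  have u0 : uIcc 0 b = Icc 0 b := uIcc_of_le hb.le
  have acH : AbsolutelyContinuousOnInterval H 0 b := by
    have h1 : AbsolutelyContinuousOnInterval (fun _ : ℝ => H0) 0 b :=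
      ((LipschitzWith.const H0).lipschitzOnWith (s := uIcc 0 b)).absolutelyContinuousOnInterval
    rw [hH']
    exact h1.add (hpg.absolutelyContinuousOnInterval_intervalIntegral left_mem_uIcc)
  obtain ⟨x1, hx1, hmax⟩ := isCompact_Icc.exists_isMaxOn (nonempty_Icc.2 hb.le) lipm.continuous.continuousOn
  have acm : AbsolutelyContinuousOnInterval (fun z => m z ^ (-α)) 0 b := by
    have hcd : ContDiffOn ℝ 1 (fun x : ℝ => x ^ (-α)) (Icc c (m x1)) :=
      contDiffOn_id.rpow_const_of_ne fun x hx => (hc.trans_le hx.1).ne'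
    obtain ⟨k, hk⟩ := hcd.exists_lipschitzOnWith (by decide) (convex_Icc _ _) isCompact_Icc
    have := hk.comp (lipm.lipschitzOnWith (s := uIcc 0 b)) (fun x hx => by
      rw [u0] at hx
      exact ⟨hmpos x hx, hmax hx⟩)
    exact this.absolutelyContinuousOnInterval
  have acK := acH.fun_mul acm
  refine ⟨lipm.continuous.continuousOn, u0 ▸ acH.continuousOn, fun r hr => ?_⟩
  have hsub : uIcc 0 r ⊆ uIcc 0 b := by
    rw [uIcc_of_le hr.1, u0]; exact Icc_subset_Icc le_rfl hr.2
  have h1 := (acK.mono hsub).integral_deriv_eq_sub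
  have hH0 : H 0 = H0 := by simp [hH]
  have hm0 : m 0 = m0 := by simp [hm]
  rw [hH0, hm0] at h1
  have h2 : ∫ z in (0:ℝ)..r, (p z - H z * m z ^ (-α) * (α * m z ^ (α - 1))) * (g z * m z ^ (-α)) =
      ∫ z in (0:ℝ)..r, deriv (fun x => H x * m x ^ (-α)) z := by
    refine intervalIntegral.integral_congr_ae ?_
    filter_upwards [hpg.ae_hasDerivAt_integral, (gi 0 b).ae_hasDerivAt_integral] with x hx1 hx2 hx
    have hxu : x ∈ uIcc 0 b := hsub (uIoc_subset_uIcc hx)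
    have hmx : 0 < m x := hc.trans_le (hmpos x (u0 ▸ hxu))
    have d1 : HasDerivAt H (p x * g x) x := by
      rw [hH']; exact (hx1 hxu 0 left_mem_uIcc).const_add _
    have d2 : HasDerivAt m (g x) x := by
      rw [hm']; exact (hx2 hxu 0 left_mem_uIcc).const_add _
    have d3 := d1.mul (d2.rpow_const (p := -α) (Or.inl hmx.ne'))
    rw [show (fun x => H x * m x ^ (-α)) = H * fun x => m x ^ (-α) from rfl, d3.deriv]
    have e1 : m x ^ (α - 1) * m x ^ (-α) = m x ^ (-1:ℝ) := by
      rw [← Real.rpow_add hmx]; ring_nf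
    have e2 : m x ^ (-α - 1) = m x ^ (-α) * m x ^ (-1:ℝ) := by
      rw [← Real.rpow_add hmx]; ring_nf
    rw [e2]
    linear_combination (-(H x * m x ^ (-α) * α * g x)) * e1
  rw [h2, h1]; ring

def AuxApprox (α b ε : ℝ) (P m : ℝ → ℝ) : Prop :=
  ∃ (Pn mn pn gn : ℝ → ℝ) (H0n : ℝ),
    (∀ r ∈ Icc 0 b, P r ≤ Pn r ∧ Pn r ≤ P r + ε) ∧
    (∀ r ∈ Icc 0 b, m r ≤ mn r ∧ mn r ≤ m r + ε) ∧
    StrictMonoOn Pn (Icc 0 b) ∧ ConcaveOn ℝ (Icc 0 b) mn ∧ ContDiffOn ℝ ∞ Pn (Icc 0 b) ∧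
    ContDiffOn ℝ ∞ mn (Icc 0 b) ∧ 0 ≤ H0n ∧
    (∀ r ∈ Ioo 0 b, HasDerivAt Pn (pn r) r ∧ HasDerivAt mn (gn r) r) ∧
    (∀ r ∈ Ioo 0 b, pn r * mn r ≥ α * (H0n + ∫ z in Ioc 0 r, pn z * gn z) ∧
      0 ≤ H0n + ∫ z in Ioc 0 r, pn z * gn z)

lemma aux_core {α b m0 H0 P0 L c ε : ℝ} (hb : 0 < b) (hα : 0 ≤ α) (hα1 : α ≤ 1) (hε : 0 < ε)
    {g m p H P : ℝ → ℝ}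
    (hga : Antitone g) (hL : ∀ x, |g x| ≤ L)
    (hm : ∀ r, m r = m0 + ∫ z in (0:ℝ)..r, g z) (hc : 0 < c) (hmpos : ∀ r ∈ Icc 0 b, c ≤ m r)
    (hpi : IntervalIntegrable p volume 0 b)
    (hH : ∀ r, H r = H0 + ∫ z in (0:ℝ)..r, p z * g z)
    (hH0 : ∀ r ∈ Icc 0 b, 0 ≤ H r)
    (hgmc : ∀ᵐ r ∂(volume.restrict (Ioc 0 b)), α * H r ≤ p r * m r)
    (hP : ∀ r, P r = P0 + ∫ z in (0:ℝ)..r, p z) : AuxApprox α b ε P m := by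
  have u0 : uIcc 0 b = Icc 0 b := uIcc_of_le hb.le
  have gi : ∀ x y, IntervalIntegrable g volume x y := fun x y => hga.intervalIntegrable
  have hpg : IntervalIntegrable (fun z => p z * g z) volume 0 b := by
    rw [intervalIntegrable_iff_integrableOn_Ioc_of_le hb.le] at hpi ⊢
    exact hpi.mul_bdd (c := L) hga.measurable.aestronglyMeasurable
      (Filter.Eventually.of_forall fun z => hL z)
  obtain ⟨cm, cH, hKf⟩ := aux_K (α := α) hb hga hL hm hc hmpos hpg hH
  -- limit objects
  set K : ℝ → ℝ := fun z => H z * m z ^ (-α) with hK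
  set B : ℝ → ℝ := fun z => α * m z ^ (α - 1) with hB
  set A : ℝ → ℝ := fun z => g z * m z ^ (-α) with hA
  set q : ℝ → ℝ := fun z => p z - K z * B z with hqdef
  have cpow : ∀ β : ℝ, ContinuousOn (fun z => m z ^ β) (Icc 0 b) := fun β =>
    cm.rpow_const fun x hx => Or.inl (hc.trans_le (hmpos x hx)).ne'
  have cK : ContinuousOn K (Icc 0 b) := cH.mul (cpow _)
  have cB : ContinuousOn B (Icc 0 b) := continuousOn_const.mul (cpow _)
  have iK : IntervalIntegrable K volume 0 b := (u0.symm ▸ cK : ContinuousOn K (uIcc 0 b)).intervalIntegrable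
  have iKB : IntervalIntegrable (fun z => K z * B z) volume 0 b :=
    (u0.symm ▸ (cK.mul cB) : ContinuousOn (fun z => K z * B z) (uIcc 0 b)).intervalIntegrable
  have iq : IntervalIntegrable q volume 0 b := hpi.sub iKB
  have hK0 : ∀ r ∈ Icc 0 b, 0 ≤ K r := fun r hr =>
    mul_nonneg (hH0 r hr) (Real.rpow_nonneg (hc.le.trans (hmpos r hr)) _)
  have hq0 : ∀ᵐ z ∂(volume.restrict (Ioc 0 b)), 0 ≤ q z := by
    filter_upwards [hgmc, ae_restrict_mem measurableSet_Ioc] with z hz hz'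
    have hmz : 0 < m z := hc.trans_le (hmpos z ⟨hz'.1.le, hz'.2⟩)
    have e : m z ^ (-α) * m z ^ (α - 1) * m z = 1 := by
      rw [← Real.rpow_add hmz, show -α + (α - 1) = -1 by ring, Real.rpow_neg_one]
      field_simp
    have h2 : K z * B z * m z = α * H z := by
      simp only [hK, hB]; linear_combination (H z * α) * e
    have h3 : 0 ≤ q z * m z := by
      simp only [hqdef]; rw [sub_mul, h2]; linarith
    exact nonneg_of_mul_nonneg_left h3 hmz
  -- approximations
  obtain ⟨qn, sq, qpos, qt⟩ := aux_q hb iq hq0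
  obtain ⟨gn, sg, ga, gb, gt⟩ := aux_g hga hL
  have gt' : ∀ᵐ z ∂(volume.restrict (Ioc 0 b)), Filter.Tendsto (fun n => gn n z) Filter.atTop (nhds (g z)) :=
    ae_restrict_of_ae gt
  have cint : ∀ {f : ℝ → ℝ}, ContinuousOn f (Icc 0 b) → IntervalIntegrable f volume 0 b :=
    fun h => (u0.symm ▸ h : ContinuousOn _ (uIcc 0 b)).intervalIntegrable
  have cmeas : ∀ {f : ℝ → ℝ}, ContinuousOn f (Icc 0 b) → AEStronglyMeasurable f (volume.restrict (Ioc 0 b)) :=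
    fun h => (h.mono Ioc_subset_Icc_self).aestronglyMeasurable measurableSet_Ioc
  set e1 : ℕ → ℝ := fun n => ∫ z in (0:ℝ)..b, |gn n z - g z| with he1
  have te1 : Filter.Tendsto e1 Filter.atTop (nhds 0) := by
    have := (aux_L1 (qn := fun _ _ => 1) (q := fun _ => 1) (An := gn) (A := g) (C := L) hb
      (fun _ => cint continuousOn_const) (cint continuousOn_const) (by simp)
      (fun n => cmeas (sg n).continuous.continuousOn) (fun n z _ => gb n z) gt').2.2
    simpa [he1] using this
  set mn : ℕ → ℝ → ℝ := fun n r => m0 + e1 n + ∫ z in (0:ℝ)..r, gn n z with hmn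
  have mcmp : ∀ n, ∀ r ∈ Icc 0 b, m r ≤ mn n r ∧ mn n r ≤ m r + 2 * e1 n := fun n r hr => by
    have := abs_le.1 (aux_cmp (cint (sg n).continuous.continuousOn) (gi 0 b) hr)
    simp only [hmn, hm r]
    constructor <;> linarith [this.1, this.2]
  have mnpos : ∀ n, ∀ r ∈ Icc 0 b, c ≤ mn n r := fun n r hr => (hmpos r hr).trans (mcmp n r hr).1
  have mt : ∀ r ∈ Icc 0 b, Filter.Tendsto (fun n => mn n r) Filter.atTop (nhds (m r)) := fun r hr => by
    refine tendsto_of_tendsto_of_tendsto_of_le_of_le tendsto_const_nhds (h := fun n => m r + 2 * e1 n) ?_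
      (fun n => (mcmp n r hr).1) (fun n => (mcmp n r hr).2)
    simpa using (te1.const_mul 2).const_add (m r)
  have mpowt : ∀ β : ℝ, ∀ r ∈ Icc 0 b, Filter.Tendsto (fun n => mn n r ^ β) Filter.atTop (nhds (m r ^ β)) :=
    fun β r hr => (mt r hr).rpow_const (Or.inl (hc.trans_le (hmpos r hr)).ne')
  have cmn : ∀ n, ContinuousOn (mn n) (Icc 0 b) := fun n =>
    continuousOn_const.add (fun x hx => (aux_prim (sg n).continuous.continuousOn hx).continuousWithinAt)
  have cmnpow : ∀ n, ∀ β : ℝ, ContinuousOn (fun z => mn n z ^ β) (Icc 0 b) := fun n β =>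
    (cmn n).rpow_const fun x hx => Or.inl (hc.trans_le (mnpos n x hx)).ne'
  have powb : ∀ β : ℝ, β ≤ 0 → ∀ n, ∀ r ∈ Icc 0 b, |mn n r ^ β| ≤ c ^ β := fun β hβ n r hr => by
    rw [abs_of_nonneg (Real.rpow_nonneg (hc.le.trans (mnpos n r hr)) _)]
    exact Real.rpow_le_rpow_of_nonpos hc (mnpos n r hr) hβ
  -- the function A
  obtain ⟨iqA, iqAn, te2⟩ := aux_L1 (qn := qn) (q := q) (An := fun n z => gn n z * mn n z ^ (-α)) (A := A)
    (C := L * c ^ (-α)) hb (fun n => cint (sq n).continuous.continuousOn) iq qt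
    (fun n => cmeas ((sg n).continuous.continuousOn.mul (cmnpow n _)))
    (fun n z hz => by
      rw [abs_mul]
      exact mul_le_mul (gb n z) (powb _ (by linarith) n z hz) (abs_nonneg _) ((abs_nonneg _).trans (hL 0)))
    (by
      filter_upwards [gt', ae_restrict_mem measurableSet_Ioc] with z hz hz'
      exact hz.mul (mpowt _ z ⟨hz'.1.le, hz'.2⟩))
  set e2 : ℕ → ℝ := fun n => ∫ z in (0:ℝ)..b, |qn n z * (gn n z * mn n z ^ (-α)) - q z * A z| with he2
  set Kn : ℕ → ℝ → ℝ := fun n r => (H0 * m0 ^ (-α) + e2 n) + ∫ z in (0:ℝ)..r, qn n z * (gn n z * mn n z ^ (-α)) with hKn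
  have Kcmp : ∀ n, ∀ r ∈ Icc 0 b, K r ≤ Kn n r ∧ Kn n r ≤ K r + 2 * e2 n := fun n r hr => by
    have := abs_le.1 (aux_cmp (iqAn n) iqA hr)
    have h2 := hKf r hr
    simp only [hKn]
    change K r = _ + ∫ z in (0:ℝ)..r, q z * A z at h2
    rw [h2]
    constructor <;> linarith [this.1, this.2]
  have Kn0 : ∀ n, ∀ r ∈ Icc 0 b, 0 ≤ Kn n r := fun n r hr => (hK0 r hr).trans (Kcmp n r hr).1
  set pn : ℕ → ℝ → ℝ := fun n r => qn n r + Kn n r * (α * mn n r ^ (α - 1)) with hpn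
  set e3 : ℕ → ℝ := fun n => ∫ z in (0:ℝ)..b, |pn n z - p z| with he3
  set Pn : ℕ → ℝ → ℝ := fun n r => (P0 + e3 n) + ∫ z in (0:ℝ)..r, pn n z with hPn
  have main := fun n => aux_smooth (m0 := m0 + e1 n) (K0 := H0 * m0 ^ (-α) + e2 n) (P0 := P0 + e3 n)
    (m := mn n) (K := Kn n) (p := pn n) (P := Pn n) hb hα (sq n) (qpos n) (sg n) (ga n)
    (fun _ => rfl) (fun r hr => hc.trans_le (mnpos n r hr)) (fun _ => rfl) (Kn0 n) (fun _ => rfl) (fun _ => rfl)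
  have cKn := fun n => (main n).1
  have cpn := fun n => (main n).2.1
  have tK : Filter.Tendsto (fun n => ∫ z in (0:ℝ)..b, |Kn n z - K z|) Filter.atTop (nhds 0) := by
    have h : Filter.Tendsto (fun n => b * (2 * e2 n)) Filter.atTop (nhds 0) := by
      simpa using (te2.const_mul 2).const_mul b
    refine squeeze_zero (fun n => intervalIntegral.integral_nonneg hb.le fun _ _ => abs_nonneg _) (fun n => ?_) h
    have : ∫ z in (0:ℝ)..b, 2 * e2 n = b * (2 * e2 n) := by
      rw [intervalIntegral.integral_const, smul_eq_mul, sub_zero]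
    rw [← this]
    refine intervalIntegral.integral_mono_on hb.le ((cint (cKn n)).sub iK).abs (cint continuousOn_const) fun z hz => ?_
    have := Kcmp n z hz
    rw [abs_le]
    constructor <;> linarith [this.1, this.2]
  obtain ⟨-, iKBn, tKB⟩ := aux_L1 (qn := Kn) (q := K) (An := fun n z => α * mn n z ^ (α - 1)) (A := B)
    (C := α * c ^ (α - 1)) hb (fun n => cint (cKn n)) iK tK
    (fun n => cmeas (continuousOn_const.mul (cmnpow n _)))
    (fun n z hz => by
      rw [abs_mul, abs_of_nonneg hα]
      exact mul_le_mul_of_nonneg_left (powb _ (by linarith) n z hz) hα)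
    (by
      filter_upwards [ae_restrict_mem measurableSet_Ioc] with z hz'
      exact (mpowt _ z ⟨hz'.1.le, hz'.2⟩).const_mul α)
  have te3 : Filter.Tendsto e3 Filter.atTop (nhds 0) := by
    have h := qt.add tKB
    rw [add_zero] at h
    refine squeeze_zero (fun n => intervalIntegral.integral_nonneg hb.le fun _ _ => abs_nonneg _) (fun n => ?_) h
    have j1 : IntervalIntegrable (fun z => |qn n z - q z|) volume 0 b :=
      ((cint (sq n).continuous.continuousOn).sub iq).abs
    have j2 : IntervalIntegrable (fun z => |Kn n z * (α * mn n z ^ (α - 1)) - K z * B z|) volume 0 b :=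
      ((iKBn n).sub iKB).abs
    rw [← intervalIntegral.integral_add j1 j2]
    refine intervalIntegral.integral_mono_on hb.le ((cint (cpn n)).sub hpi).abs (j1.add j2) fun z hz => ?_
    refine le_trans (le_of_eq ?_) (abs_add_le _ _)
    congr 1
    simp only [hpn, hqdef]; ring
  have Pcmp : ∀ n, ∀ r ∈ Icc 0 b, P r ≤ Pn n r ∧ Pn n r ≤ P r + 2 * e3 n := fun n r hr => by
    have := abs_le.1 (aux_cmp (cint (cpn n)) hpi hr)
    simp only [hPn, hP r]
    constructor <;> linarith [this.1, this.2]
  have ev1 := te1.eventually_lt_const (show (0:ℝ) < ε / 2 by linarith)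
  have ev3 := te3.eventually_lt_const (show (0:ℝ) < ε / 2 by linarith)
  obtain ⟨n, hn1, hn3⟩ := (ev1.and ev3).exists
  obtain ⟨-, -, r1, r2, r3, r4, r5, r6, r7⟩ := main n
  refine ⟨Pn n, mn n, pn n, gn n, mn n 0 ^ α * Kn n 0, fun r hr => ⟨(Pcmp n r hr).1, ?_⟩,
    fun r hr => ⟨(mcmp n r hr).1, ?_⟩, r1, r2, r3, r4, r5, r6, r7⟩
  · linarith [(Pcmp n r hr).2]
  · linarith [(mcmp n r hr).2]

lemma aux_shift {α b b0 H0 ε : ℝ} (hb : 0 < b) (hbb : b < b0) (hα : 0 ≤ α) (hα1 : α ≤ 1) (hε : 0 < ε)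
    {m m' p P : ℝ → ℝ} (hmc : ContinuousOn m (Icc 0 b0)) (hmv : ConcaveOn ℝ (Icc 0 b0) m)
    (hmp : ∀ r, 0 < r → r ≤ b0 → 0 < m r)
    (hmd : ∀ᵐ r, r ∈ Ioo 0 b0 → HasDerivAt m (m' r) r)
    (hPm : MonotoneOn P (Icc 0 b0)) (hP : ∀ r ∈ Icc 0 b0, P r = ∫ z in (0:ℝ)..r, p z)
    (hpi : IntervalIntegrable p volume 0 b0)
    (hpm : IntervalIntegrable (fun z => p z * m' z) volume 0 b0)
    (hgmc : ∀ᵐ r, r ∈ Ioo 0 b0 → α * (H0 + ∫ z in (0:ℝ)..r, p z * m' z) ≤ p r * m r ∧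
      0 ≤ H0 + ∫ z in (0:ℝ)..r, p z * m' z) : AuxApprox α b ε P m := by
  have hb0 : 0 < b0 := hb.trans hbb
  have u0 : uIcc 0 b0 = Icc 0 b0 := uIcc_of_le hb0.le
  have cprim : ∀ {f : ℝ → ℝ}, IntervalIntegrable f volume 0 b0 →
      ContinuousOn (fun r => ∫ z in (0:ℝ)..r, f z) (Icc 0 b0) := fun h =>
    u0 ▸ (h.absolutelyContinuousOnInterval_intervalIntegral left_mem_uIcc).continuousOn
  have cP : ContinuousOn P (Icc 0 b0) := (cprim hpi).congr hP
  have cH : ContinuousOn (fun r => H0 + ∫ z in (0:ℝ)..r, p z * m' z) (Icc 0 b0) :=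
    continuousOn_const.add (cprim hpm)
  have Hnn : ∀ r ∈ Ioo 0 b0, 0 ≤ H0 + ∫ z in (0:ℝ)..r, p z * m' z := by
    have h1 : (fun r => min (H0 + ∫ z in (0:ℝ)..r, p z * m' z) 0) =ᵐ[volume.restrict (Ioo 0 b0)] fun _ => 0 := by
      rw [Filter.EventuallyEq, ae_restrict_iff' measurableSet_Ioo]
      filter_upwards [hgmc] with r hr hr'
      exact min_eq_right (hr hr').2
    have h2 := Measure.eqOn_Ioo_of_ae_eq volume h1 ((continuous_id.min continuous_const).comp_continuousOn (cH.mono Ioo_subset_Icc_self)) continuousOn_const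
    intro r hr
    exact min_eq_right_iff.1 (h2 hr)
  -- choice of the shift
  have ucm := isCompact_Icc.uniformContinuousOn_of_continuous hmc
  have ucP := isCompact_Icc.uniformContinuousOn_of_continuous cP
  rw [Metric.uniformContinuousOn_iff] at ucm ucP
  obtain ⟨δ1, hδ1, hm1⟩ := ucm (ε / 4) (by linarith)
  obtain ⟨δ2, hδ2, hP2⟩ := ucP (ε / 2) (by linarith)
  obtain ⟨δ, hδ, hδ'⟩ : ∃ δ, 0 < δ ∧ δ < min (min δ1 δ2) (b0 - b) :=
    exists_between (lt_min (lt_min hδ1 hδ2) (by linarith))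
  have hd1 : δ < δ1 := hδ'.trans_le ((min_le_left _ _).trans (min_le_left _ _))
  have hd2 : δ < δ2 := hδ'.trans_le ((min_le_left _ _).trans (min_le_right _ _))
  have hd3 : b + δ < b0 := by linarith [hδ'.trans_le (min_le_right _ _)]
  have dist1 : ∀ r : ℝ, dist (r + δ) r = δ := fun r => by
    rw [Real.dist_eq, add_sub_cancel_left, abs_of_pos hδ]
  have sh : ∀ r ∈ Icc 0 b, r + δ ∈ Ioo 0 b0 := fun r hr => ⟨by linarith [hr.1], by linarith [hr.2]⟩
  have m1 : ∀ r ∈ Icc 0 b, |m (r + δ) - m r| < ε / 4 := fun r hr =>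
    hm1 _ (Ioo_subset_Icc_self (sh r hr)) _ ⟨hr.1, hr.2.trans hbb.le⟩ (by rw [dist1]; exact hd1)
  have P2 : ∀ r ∈ Icc 0 b, |P (r + δ) - P r| < ε / 2 := fun r hr =>
    hP2 _ (Ioo_subset_Icc_self (sh r hr)) _ ⟨hr.1, hr.2.trans hbb.le⟩ (by rw [dist1]; exact hd2)
  -- the derivative
  set g0 : ℝ → ℝ := fun x => derivWithin m (Ioi x) x with hg0
  have g0d : ∀ x ∈ Ioo 0 b0, HasDerivWithinAt m (g0 x) (Ioi x) x := fun x hx => by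
    have h := hmv.neg.differentiableWithinAt_Ioi_of_mem_interior (x := x) (by rwa [interior_Icc])
    have h2 : DifferentiableWithinAt ℝ m (Ioi x) x := by simpa using h.neg
    exact h2.hasDerivWithinAt
  have g0a : AntitoneOn g0 (Ioo 0 b0) := by
    have h := hmv.neg.monotoneOn_rightDeriv
    rw [interior_Icc] at h
    intro x hx y hy hxy
    have := h hx hy hxy
    simp only [derivWithin.neg] at this
    exact neg_le_neg_iff.1 this
  set g : ℝ → ℝ := fun x => g0 (max 0 (min x b) + δ) with hg
  have clamp : ∀ x : ℝ, max 0 (min x b) ∈ Icc 0 b := fun x => ⟨le_max_left _ _, max_le hb.le (min_le_right _ _)⟩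
  have clampid : ∀ x ∈ Icc 0 b, g x = g0 (x + δ) := fun x hx => by
    simp only [hg]; rw [min_eq_left hx.2, max_eq_right hx.1]
  have ga : Antitone g := fun x y hxy =>
    g0a (sh _ (clamp x)) (sh _ (clamp y)) (by gcongr)
  have gL : ∀ x, |g x| ≤ |g0 δ| + |g0 (b + δ)| := fun x => by
    have h0 : (0:ℝ) ∈ Icc 0 b := ⟨le_rfl, hb.le⟩
    have hbm : b ∈ Icc 0 b := ⟨hb.le, le_rfl⟩
    have e1 : g x ≤ g0 δ := by
      have := g0a (sh 0 h0) (sh _ (clamp x)) (by linarith [(clamp x).1])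
      rwa [zero_add] at this
    have e2 : g0 (b + δ) ≤ g x := g0a (sh _ (clamp x)) (sh b hbm) (by linarith [(clamp x).2])
    have := le_abs_self (g0 δ)
    have := neg_abs_le (g0 (b + δ))
    have := abs_nonneg (g0 δ)
    have := abs_nonneg (g0 (b + δ))
    rw [abs_le]; constructor <;> linarith
  have gm : ∀ᵐ x, x ∈ Icc 0 b → g x = m' (x + δ) := by
    have := (measurePreserving_add_right volume δ).quasiMeasurePreserving.ae hmd
    filter_upwards [this] with x hx hxb
    rw [clampid x hxb]
    have := hx (sh x hxb)
    exact this.hasDerivWithinAt.derivWithin (uniqueDiffWithinAt_Ioi _)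
  have hgm' := (measurePreserving_add_right volume δ).quasiMeasurePreserving.ae hgmc
  have mval : ∀ r ∈ Icc 0 b, m δ + ∫ z in (0:ℝ)..r, g z = m (r + δ) := fun r hr => by
    have e1 : ∫ z in (0:ℝ)..r, g z = ∫ z in (0:ℝ)..r, g0 (z + δ) := by
      refine intervalIntegral.integral_congr fun z hz => ?_
      rw [uIcc_of_le hr.1] at hz
      exact clampid z ⟨hz.1, hz.2.trans hr.2⟩
    have hss : Icc δ (r + δ) ⊆ Ioo 0 b0 := fun z hz => ⟨hδ.trans_le hz.1, hz.2.trans_lt (by linarith [hr.2])⟩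
    have hle : δ ≤ r + δ := by linarith [hr.1]
    have e2 := intervalIntegral.integral_eq_sub_of_hasDeriv_right_of_le (f := m) (f' := g0) hle
      (hmc.mono (hss.trans Ioo_subset_Icc_self)) (fun x hx => g0d x (hss (Ioo_subset_Icc_self hx)))
      (by
        apply AntitoneOn.intervalIntegrable
        rw [uIcc_of_le hle]
        exact g0a.mono hss)
    rw [e1, intervalIntegral.integral_comp_add_right, zero_add, e2]; ring
  have isub : ∀ {f : ℝ → ℝ}, IntervalIntegrable f volume 0 b0 → ∀ x ∈ Icc 0 b0, ∀ y ∈ Icc 0 b0,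
      IntervalIntegrable f volume x y := fun h x hx y hy =>
    h.mono_set (by rw [u0]; exact uIcc_subset_Icc hx hy)
  have z0 : (0:ℝ) ∈ Icc 0 b0 := ⟨le_rfl, hb0.le⟩
  have zδ : δ ∈ Icc 0 b0 := ⟨hδ.le, by linarith⟩
  have Hval : ∀ r ∈ Icc 0 b, (H0 + ∫ z in (0:ℝ)..δ, p z * m' z) + ∫ z in (0:ℝ)..r, p (z + δ) * g z =
      H0 + ∫ z in (0:ℝ)..(r + δ), p z * m' z := fun r hr => by
    have e1 : ∫ z in (0:ℝ)..r, p (z + δ) * g z = ∫ z in (0:ℝ)..r, p (z + δ) * m' (z + δ) := by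
      refine intervalIntegral.integral_congr_ae ?_
      filter_upwards [gm] with z hz hz'
      rw [uIoc_of_le hr.1] at hz'
      rw [hz ⟨hz'.1.le, hz'.2.trans hr.2⟩]
    have zr := Ioo_subset_Icc_self (sh r hr)
    rw [e1, intervalIntegral.integral_comp_add_right (fun z => p z * m' z), zero_add, add_assoc,
      intervalIntegral.integral_add_adjacent_intervals (isub hpm _ z0 _ zδ) (isub hpm _ zδ _ zr)]
  have Pval : ∀ r ∈ Icc 0 b, P δ + ∫ z in (0:ℝ)..r, p (z + δ) = P (r + δ) := fun r hr => by
    have zr := Ioo_subset_Icc_self (sh r hr)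
    rw [intervalIntegral.integral_comp_add_right, zero_add, hP δ zδ, hP _ zr,
      intervalIntegral.integral_add_adjacent_intervals (isub hpi _ z0 _ zδ) (isub hpi _ zδ _ zr)]
  have pi' : IntervalIntegrable (fun z => p (z + δ)) volume 0 b := by
    rw [IntervalIntegrable.comp_add_right_iff, zero_add]
    exact isub hpi _ zδ _ (Ioo_subset_Icc_self (sh b ⟨hb.le, le_rfl⟩))
  obtain ⟨Pn, mn, pn, gn, H0n, k1, k2, k3⟩ := aux_core (α := α) (b := b) (m0 := m δ + ε / 4)
    (H0 := H0 + ∫ z in (0:ℝ)..δ, p z * m' z) (P0 := P δ) (L := |g0 δ| + |g0 (b + δ)|) (c := ε / 4) (ε := ε / 2)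
    (g := g) (m := fun r => m δ + ε / 4 + ∫ z in (0:ℝ)..r, g z) (p := fun z => p (z + δ))
    (H := fun r => (H0 + ∫ z in (0:ℝ)..δ, p z * m' z) + ∫ z in (0:ℝ)..r, p (z + δ) * g z)
    (P := fun r => P δ + ∫ z in (0:ℝ)..r, p (z + δ)) hb hα hα1 (by linarith) ga gL (fun _ => rfl) (by linarith)
    (fun r hr => by
      have := mval r hr
      have := hmp (r + δ) (sh r hr).1 (sh r hr).2.le
      change ε / 4 ≤ m δ + ε / 4 + _
      linarith)
    pi' (fun _ => rfl) (fun r hr => by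
      change 0 ≤ (H0 + ∫ z in (0:ℝ)..δ, p z * m' z) + ∫ z in (0:ℝ)..r, p (z + δ) * g z
      rw [Hval r hr]; exact Hnn _ (sh r hr))
    (by
      rw [ae_restrict_iff' measurableSet_Ioc]
      filter_upwards [hgm'] with r hr hrb
      have hrc : r ∈ Icc 0 b := Ioc_subset_Icc_self hrb
      obtain ⟨h1, h2⟩ := hr (sh r hrc)
      have h3 := mval r hrc
      have h4 := hmp (r + δ) (sh r hrc).1 (sh r hrc).2.le
      rw [Hval r hrc, show m δ + ε / 4 + ∫ z in (0:ℝ)..r, g z = m (r + δ) + ε / 4 by linarith]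
      have h5 : 0 ≤ p (r + δ) := nonneg_of_mul_nonneg_left ((mul_nonneg hα h2).trans h1) h4
      have h6 := mul_nonneg h5 hε.le
      linarith)
    (fun _ => rfl)
  refine ⟨Pn, mn, pn, gn, H0n, fun r hr => ?_, fun r hr => ?_, k3⟩
  · have h1 := k1 r hr
    have h2 := Pval r hr
    simp only [h2] at h1
    have h3 := hPm ⟨hr.1, hr.2.trans hbb.le⟩ (Ioo_subset_Icc_self (sh r hr)) (by linarith)
    have h4 := abs_lt.1 (P2 r hr)
    constructor <;> linarith [h1.1, h1.2, h4.2]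
  · have h1 := k2 r hr
    have h2 := mval r hr
    simp only at h1
    have h4 := abs_lt.1 (m1 r hr)
    constructor <;> linarith [h1.1, h1.2, h4.1, h4.2]

/-- Smoothing lemma for the generalized McCann condition: if `P` (encoded
through a density `p` with `P r = ∫₀^r p`) satisfies `GMC(m,d)` on `(0,M)`,
and `0 ≤ M' < M'' < M` with either `M' > 0` or (`M' = 0` and) `p = P'`
integrable near `0`, then there exist sequences `Pₙ ≥ P` strictly increasing
and `mₙ ≥ m` concave on `[0,M'']`, smooth on `[M',M'']`, still satisfying
`GMC(mₙ,d)` on `(0,M'')` (for suitable `H₀ₙ ≥ 0`), with `Pₙ → P` and `mₙ → m`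
uniformly on `[M',M'']`. -/
theorem stmt_11 (d : ℕ) (hd : 1 ≤ d) (M : ℝ≥0∞) (hM : 0 < M)
    (m m' : ℝ → ℝ)
    (hm_cont : ContinuousOn m {r : ℝ | 0 ≤ r ∧ ENNReal.ofReal r < M})
    (hm_conc : ConcaveOn ℝ {r : ℝ | 0 ≤ r ∧ ENNReal.ofReal r < M} m)
    (hm_pos : ∀ r : ℝ, 0 < r → ENNReal.ofReal r < M → 0 < m r)
    (hm_deriv : ∀ᵐ r ∂(volume.restrict {r : ℝ | 0 < r ∧ ENNReal.ofReal r < M}),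
      HasDerivAt m (m' r) r)
    (P p : ℝ → ℝ)
    (hPmono : MonotoneOn P {r : ℝ | 0 ≤ r ∧ ENNReal.ofReal r < M})
    (hP : ∀ r : ℝ, 0 ≤ r → ENNReal.ofReal r < M → P r = ∫ z in Ioc 0 r, p z)
    (hint : ∀ r : ℝ, 0 ≤ r → ENNReal.ofReal r < M →
      IntegrableOn (fun z => p z * m' z) (Ioc 0 r))
    (H0 : ℝ) (hH0 : 0 ≤ H0)
    (hgmc : ∀ᵐ r ∂(volume.restrict {r : ℝ | 0 < r ∧ ENNReal.ofReal r < M}),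
      p r * m r ≥ (1 - 1 / (d : ℝ)) * (H0 + ∫ z in Ioc 0 r, p z * m' z) ∧
      0 ≤ H0 + ∫ z in Ioc 0 r, p z * m' z)
    (M' M'' : ℝ) (hM'0 : 0 ≤ M') (hM'M'' : M' < M'')
    (hM'' : ENNReal.ofReal M'' < M)
    (hM' : 0 < M' ∨ ∃ ε : ℝ, 0 < ε ∧ IntegrableOn p (Ioc 0 ε)) :
    ∃ (Pn mn pn mn' : ℕ → ℝ → ℝ) (H0n : ℕ → ℝ),
      (∀ n : ℕ,
        (∀ r ∈ Icc 0 M'', P r ≤ Pn n r) ∧ StrictMonoOn (Pn n) (Icc 0 M'') ∧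
        (∀ r ∈ Icc 0 M'', m r ≤ mn n r) ∧ ConcaveOn ℝ (Icc 0 M'') (mn n) ∧
        ContDiffOn ℝ (⊤ : ℕ∞) (Pn n) (Icc M' M'') ∧ ContDiffOn ℝ (⊤ : ℕ∞) (mn n) (Icc M' M'') ∧
        0 ≤ H0n n ∧
        (∀ᵐ r ∂(volume.restrict (Ioo 0 M'')),
          HasDerivAt (Pn n) (pn n r) r ∧ HasDerivAt (mn n) (mn' n r) r) ∧
        (∀ᵐ r ∂(volume.restrict (Ioo 0 M'')),
          pn n r * mn n r ≥
            (1 - 1 / (d : ℝ)) * (H0n n + ∫ z in Ioc 0 r, pn n z * mn' n z) ∧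
          0 ≤ H0n n + ∫ z in Ioc 0 r, pn n z * mn' n z)) ∧
      TendstoUniformlyOn (fun n => Pn n) P Filter.atTop (Icc M' M'') ∧
      TendstoUniformlyOn (fun n => mn n) m Filter.atTop (Icc M' M'') := by
  have hb : 0 < M'' := hM'0.trans_lt hM'M''
  obtain ⟨t, ht1, ht2⟩ := exists_between hM''
  have htt : t ≠ ⊤ := ht2.ne_top
  have hbb : M'' < t.toReal := by
    rw [← ENNReal.ofReal_toReal htt] at ht1
    exact (ENNReal.ofReal_lt_ofReal_iff_of_nonneg hb.le).1 ht1
  have htM : ENNReal.ofReal t.toReal < M := by rwa [ENNReal.ofReal_toReal htt]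
  generalize t.toReal = b0 at hbb htM
  have hb0 : 0 < b0 := hb.trans hbb
  have hsub : Icc 0 b0 ⊆ {r : ℝ | 0 ≤ r ∧ ENNReal.ofReal r < M} := fun r hr =>
    ⟨hr.1, (ENNReal.ofReal_le_ofReal hr.2).trans_lt htM⟩
  have hd1 : (1:ℝ) ≤ d := by exact_mod_cast hd
  have hα : 0 ≤ 1 - 1 / (d:ℝ) := by
    rw [sub_nonneg, div_le_one (by linarith)]; exact hd1
  have hα1 : 1 - 1 / (d:ℝ) ≤ 1 := by
    have : 0 ≤ 1 / (d:ℝ) := by positivity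
    linarith
  have hmeas : MeasurableSet {r : ℝ | 0 < r ∧ ENNReal.ofReal r < M} :=
    measurableSet_Ioi.inter (ENNReal.measurable_ofReal measurableSet_Iio)
  rw [ae_restrict_iff' hmeas] at hm_deriv hgmc
  have hIoo : Ioo 0 b0 ⊆ {r : ℝ | 0 < r ∧ ENNReal.ofReal r < M} := fun r hr =>
    ⟨hr.1, (hsub (Ioo_subset_Icc_self hr)).2⟩
  have hmd : ∀ᵐ r, r ∈ Ioo 0 b0 → HasDerivAt m (m' r) r := by
    filter_upwards [hm_deriv] with r h hr using h (hIoo hr)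
  have key : ∀ ε : ℝ, 0 < ε → AuxApprox (1 - 1 / (d:ℝ)) M'' ε P m := by
    intro ε hε
    by_cases hpi : IntegrableOn p (Ioc 0 b0)
    · refine aux_shift (H0 := H0) (p := p) hb hbb hα hα1 hε (hm_cont.mono hsub)
        (hm_conc.subset hsub (convex_Icc _ _)) (fun r h1 h2 => hm_pos r h1 (hsub ⟨h1.le, h2⟩).2)
        hmd (hPmono.mono hsub) (fun r hr => ?_)
        ((intervalIntegrable_iff_integrableOn_Ioc_of_le hb0.le).2 hpi)
        ((intervalIntegrable_iff_integrableOn_Ioc_of_le hb0.le).2 (hint b0 hb0.le htM)) ?_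
      · rw [intervalIntegral.integral_of_le hr.1]
        exact hP r hr.1 (hsub hr).2
      · filter_upwards [hgmc] with r h hr
        rw [intervalIntegral.integral_of_le hr.1.le]
        exact h (hIoo hr)
    · have hPb : P b0 = 0 := by rw [hP b0 hb0.le htM]; exact integral_undef hpi
      have h0m : (0:ℝ) ∈ Icc 0 b0 := ⟨le_rfl, hb0.le⟩
      have hP0 : P 0 = 0 := by rw [hP 0 le_rfl (hsub h0m).2]; simp
      have hPz : ∀ r ∈ Icc 0 b0, P r = 0 := fun r hr => le_antisymm
        (hPb ▸ hPmono (hsub hr) (hsub ⟨hb0.le, le_rfl⟩) hr.2)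
        (hP0 ▸ hPmono (hsub h0m) (hsub hr) hr.1)
      refine aux_shift (H0 := 0) (p := fun _ => 0) hb hbb hα hα1 hε (hm_cont.mono hsub)
        (hm_conc.subset hsub (convex_Icc _ _)) (fun r h1 h2 => hm_pos r h1 (hsub ⟨h1.le, h2⟩).2)
        hmd (hPmono.mono hsub) (fun r hr => ?_) (by simp) (by simp) ?_
      · simp [hPz r hr]
      · exact Filter.Eventually.of_forall fun r _ => by simp
  have key' := fun n : ℕ => key (1 / ((n:ℝ) + 1)) (by positivity)
  choose Pn mn pn gn H0n k1 k2 k3 k4 k5 k6 k7 k8 k9 using key'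
  have hss : Icc M' M'' ⊆ Icc 0 M'' := Icc_subset_Icc hM'0 le_rfl
  have unif : ∀ {F : ℕ → ℝ → ℝ} {f : ℝ → ℝ},
      (∀ n : ℕ, ∀ r ∈ Icc 0 M'', f r ≤ F n r ∧ F n r ≤ f r + 1 / ((n:ℝ) + 1)) →
      TendstoUniformlyOn (fun n => F n) f Filter.atTop (Icc M' M'') := by
    intro F f h
    rw [Metric.tendstoUniformlyOn_iff]
    intro ε hε
    filter_upwards [(tendsto_one_div_add_atTop_nhds_zero_nat (𝕜 := ℝ)).eventually_lt_const hε] with n hn x hx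
    have := h n x (hss hx)
    rw [Real.dist_eq, abs_lt]
    constructor <;> linarith [this.1, this.2]
  refine ⟨Pn, mn, pn, gn, H0n, fun n => ⟨fun r hr => (k1 n r hr).1, k3 n, fun r hr => (k2 n r hr).1, k4 n,
    (k5 n).mono hss, (k6 n).mono hss, k7 n, ?_, ?_⟩, unif k1, unif k2⟩
  · exact (ae_restrict_iff' measurableSet_Ioo).2 (Filter.Eventually.of_forall (k8 n))
  · exact (ae_restrict_iff' measurableSet_Ioo).2 (Filter.Eventually.of_forall (k9 n))
end

section
/- Let (X, W) be a metric space, V : X → (−∞, +∞] a proper lower semicontinuous functional with domain D(V) = {x : V(x) < ∞}, and let S be a contraction gradient flow of V on (X, W). Let δ ≥ 0, L ≥ 0, and let u : [0,1] → X be a curve with u₀, u₁ ∈ D(V), W(u_r, u_s) ≤ L·|r − s| for all r, s ∈ [0,1], and L² ≤ W²(u₀, u₁) + δ². Then for every s ∈ [0,1] and every t > 0: V(S_t(u_s)) ≤ (1 − s)·V(u₀) + s·V(u₁) + (s(1 − s)/(2t))·δ². -/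
open Set Filter

/-- A contraction gradient flow of the functional `V` on the metric space `X`:
a semigroup of continuous maps `S t`, continuous at `t = 0`, satisfying the
evolution variational inequality
`½ dist(S t u, v)² − ½ dist(u,v)² ≤ t (V v − V (S t u))` for all `t > 0`,
`u ∈ X`, `v ∈ D(V)` (written here in the equivalent rearranged form to avoid
subtraction of extended reals). -/
def IsContractionGradientFlow {X : Type*} [MetricSpace X]
    (S : ℝ → X → X) (V : X → EReal) : Prop :=
  (∀ t : ℝ, 0 ≤ t → Continuous (S t)) ∧
  (∀ u : X, S 0 u = u) ∧
  (∀ t h : ℝ, 0 ≤ t → 0 ≤ h → ∀ u : X, S (t + h) u = S h (S t u)) ∧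
  (∀ u : X, Tendsto (fun t => S t u) (nhdsWithin 0 (Ioi 0)) (nhds u)) ∧
  (∀ t : ℝ, 0 < t → ∀ u v : X, V v ≠ ⊤ →
    ((1 / 2 * dist (S t u) v ^ 2 : ℝ) : EReal) + (t : EReal) * V (S t u) ≤
      ((1 / 2 * dist u v ^ 2 : ℝ) : EReal) + (t : EReal) * V v)

/-- Approximated convexity along almost-geodesics (Daneri–Savaré): if `S` is a
contraction gradient flow of `V` and `u : [0,1] → X` is an `L`-Lipschitz curve
with endpoints in `D(V)` and `L² ≤ dist(u₀,u₁)² + δ²`, then for all `s ∈ [0,1]`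
and `t > 0`, `V(S t (u s)) ≤ (1−s)V(u₀) + sV(u₁) + s(1−s)δ²/(2t)`. -/
theorem stmt_12 {X : Type*} [MetricSpace X] (V : X → EReal)
    (hV_ne_bot : ∀ x, V x ≠ ⊥) (hV_proper : ∃ x, V x ≠ ⊤)
    (hV_lsc : LowerSemicontinuous V)
    (S : ℝ → X → X) (hS : IsContractionGradientFlow S V)
    (δ L : ℝ) (hδ : 0 ≤ δ) (hL : 0 ≤ L)
    (u : ℝ → X) (hu0 : V (u 0) ≠ ⊤) (hu1 : V (u 1) ≠ ⊤)
    (hLip : ∀ r ∈ Icc (0:ℝ) 1, ∀ s ∈ Icc (0:ℝ) 1, dist (u r) (u s) ≤ L * |r - s|)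
    (hL2 : L ^ 2 ≤ dist (u 0) (u 1) ^ 2 + δ ^ 2) :
    ∀ s ∈ Icc (0:ℝ) 1, ∀ t : ℝ, 0 < t →
      V (S t (u s)) ≤
        (((1 - s) * (V (u 0)).toReal + s * (V (u 1)).toReal +
          s * (1 - s) / (2 * t) * δ ^ 2 : ℝ) : EReal) := by
  intro s hs t ht
  obtain ⟨-, -, -, -, hE⟩ := hS
  have h0 := hE t ht (u s) (u 0) hu0
  have h1 := hE t ht (u s) (u 1) hu1
  have d0 := hLip s hs 0 (by simp)
  have d1 := hLip s hs 1 (by simp)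
  have htri := dist_triangle_left (u 0) (u 1) (S t (u s))
  obtain ⟨hs0, hs1⟩ := hs
  rw [sub_zero, abs_of_nonneg hs0] at d0
  rw [abs_of_nonpos (by linarith)] at d1
  have b0 := hV_ne_bot (u 0)
  have b1 := hV_ne_bot (u 1)
  have bw := hV_ne_bot (S t (u s))
  generalize V (u 0) = v0 at *
  generalize V (u 1) = v1 at *
  generalize V (S t (u s)) = w at *
  lift v0 to ℝ using ⟨hu0, b0⟩
  lift v1 to ℝ using ⟨hu1, b1⟩
  have hw : w ≠ ⊤ := by
    rintro rfl
    rw [EReal.coe_mul_top_of_pos ht, EReal.coe_add_top, top_le_iff, ← EReal.coe_mul,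
      ← EReal.coe_add] at h0
    exact EReal.coe_ne_top _ h0
  lift w to ℝ using ⟨hw, bw⟩
  norm_cast at h0 h1
  simp only [EReal.toReal_coe]
  norm_cast
  have pa : 0 ≤ dist (S t (u s)) (u 0) := dist_nonneg
  have pb : 0 ≤ dist (S t (u s)) (u 1) := dist_nonneg
  have pD : 0 ≤ dist (u 0) (u 1) := dist_nonneg
  have p0 : 0 ≤ dist (u s) (u 0) := dist_nonneg
  have p1 : 0 ≤ dist (u s) (u 1) := dist_nonneg
  generalize dist (S t (u s)) (u 0) = a at *
  generalize dist (S t (u s)) (u 1) = b at *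
  generalize dist (u 0) (u 1) = D at *
  generalize dist (u s) (u 0) = x at *
  generalize dist (u s) (u 1) = y at *
  have hx : x ^ 2 ≤ (L * s) ^ 2 := pow_le_pow_left₀ p0 d0 2
  have hy : y ^ 2 ≤ (L * -(s - 1)) ^ 2 := pow_le_pow_left₀ p1 d1 2
  have hD : D ^ 2 ≤ (a + b) ^ 2 := pow_le_pow_left₀ pD htri 2
  have hs1' : 0 ≤ 1 - s := by linarith
  have k0 := mul_le_mul_of_nonneg_left (h0.trans (add_le_add_left
    (mul_le_mul_of_nonneg_left hx (by norm_num : (0:ℝ) ≤ 1 / 2)) _)) hs1'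
  have k1 := mul_le_mul_of_nonneg_left (h1.trans (add_le_add_left
    (mul_le_mul_of_nonneg_left hy (by norm_num : (0:ℝ) ≤ 1 / 2)) _)) hs0
  have k2 := mul_le_mul_of_nonneg_left (hL2.trans (add_le_add_left hD _)) (mul_nonneg hs0 hs1')
  have k3 := sq_nonneg ((1 - s) * a - s * b)
  have key : t * w ≤ t * ((1 - s) * v0 + s * v1 + s * (1 - s) / (2 * t) * δ ^ 2) := by
    have : t * ((1 - s) * v0 + s * v1 + s * (1 - s) / (2 * t) * δ ^ 2)
        = t * ((1 - s) * v0 + s * v1) + s * (1 - s) / 2 * δ ^ 2 := by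
      field_simp
    rw [this]
    linarith
  exact le_of_mul_le_mul_left key ht
end

section
/- Let (X, W) be a metric space, V : X → (−∞, +∞] a proper lower semicontinuous functional with domain D(V) = {x : V(x) < ∞}, and let S be a contraction gradient flow of V on (X, W). Let u : [0,1] → X be a constant-speed minimizing geodesic with endpoints u₀, u₁ ∈ D(V), i.e. W(u_r, u_s) = |r − s|·W(u₀, u₁) for all r, s ∈ [0,1]. Then V(u_s) ≤ (1 − s)·V(u₀) + s·V(u₁) for every s ∈ [0,1]; in particular V is convex along this geodesic. -/
open Set Filter

/-- Convexity of `V` along constant-speed minimizing geodesics whose endpoints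
lie in `D(V)`, whenever `V` admits a contraction gradient flow:
`V(u_s) ≤ (1−s)V(u₀) + sV(u₁)` for every `s ∈ [0,1]`. -/
theorem stmt_13 {X : Type*} [MetricSpace X] (V : X → EReal)
    (hV_ne_bot : ∀ x, V x ≠ ⊥) (hV_proper : ∃ x, V x ≠ ⊤)
    (hV_lsc : LowerSemicontinuous V)
    (S : ℝ → X → X) (hS : IsContractionGradientFlow S V)
    (u : ℝ → X) (hu0 : V (u 0) ≠ ⊤) (hu1 : V (u 1) ≠ ⊤)
    (hgeo : ∀ r ∈ Icc (0:ℝ) 1, ∀ s ∈ Icc (0:ℝ) 1,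
      dist (u r) (u s) = |r - s| * dist (u 0) (u 1)) :
    ∀ s ∈ Icc (0:ℝ) 1,
      V (u s) ≤ (((1 - s) * (V (u 0)).toReal + s * (V (u 1)).toReal : ℝ) : EReal) := by
  obtain ⟨-, -, -, hcont, hevi⟩ := hS
  intro s hs
  by_contra hlt
  rw [not_le] at hlt
  have h1 := (hcont (u s)).eventually (hV_lsc (u s) _ hlt)
  have h2 : ∀ᶠ t in nhdsWithin (0:ℝ) (Ioi 0), t ∈ Ioi (0:ℝ) := self_mem_nhdsWithin
  obtain ⟨t, ht1, ht⟩ := (h1.and h2).exists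
  have ht0 : (0:ℝ) < t := ht
  have e0 := hevi t ht0 (u s) (u 0) hu0
  have e1 := hevi t ht0 (u s) (u 1) hu1
  have d0 := hgeo s hs 0 (by simp)
  have d1 := hgeo s hs 1 (by simp)
  rw [sub_zero, abs_of_nonneg hs.1] at d0
  rw [abs_of_nonpos (by linarith [hs.2])] at d1
  have tri := dist_triangle_left (u 0) (u 1) (S t (u s))
  have hD : 0 ≤ dist (u 0) (u 1) := dist_nonneg
  rw [d0] at e0
  rw [d1] at e1
  generalize dist (S t (u s)) (u 0) = a at *
  generalize dist (S t (u s)) (u 1) = b at *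
  generalize dist (u 0) (u 1) = D at *
  have hb0 := hV_ne_bot (u 0)
  have hb1 := hV_ne_bot (u 1)
  have hbS := hV_ne_bot (S t (u s))
  generalize V (u 0) = A at *
  generalize V (u 1) = B at *
  generalize V (S t (u s)) = C at *
  lift A to ℝ using ⟨hu0, hb0⟩
  lift B to ℝ using ⟨hu1, hb1⟩
  have hC : C ≠ ⊤ := by
    rintro rfl
    rw [EReal.coe_mul_top_of_pos ht0, EReal.coe_add_top] at e0
    rw [← EReal.coe_mul, ← EReal.coe_add] at e0
    exact EReal.coe_ne_top _ (top_le_iff.1 e0)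
  lift C to ℝ using ⟨hC, hbS⟩
  norm_cast at e0 e1 ht1
  simp only [EReal.toReal_coe] at ht1
  obtain ⟨hs0, hs1⟩ := hs
  have k0 := mul_le_mul_of_nonneg_left e0 (sub_nonneg.2 hs1)
  have k1 := mul_le_mul_of_nonneg_left e1 hs0
  have k2 := mul_lt_mul_of_pos_left ht1 ht0
  have k3 : D ^ 2 ≤ (a + b) ^ 2 := pow_le_pow_left₀ hD tri 2
  have k4 := mul_le_mul_of_nonneg_left k3 (mul_nonneg hs0 (sub_nonneg.2 hs1))
  nlinarith [sq_nonneg ((1 - s) * a - s * b)]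
end

section
/- Let Ω ⊂ ℝ^d be a bounded open set with Lebesgue measure ω := Leb(Ω) > 0. Let P : [0,∞) → [0,∞) be continuous and nondecreasing with P(0) = 0, let ρ : Ω → [0,∞) be Lebesgue-integrable with ∫_Ω ρ dx = 𝔪 > 0, and suppose g := P∘ρ is Lebesgue-integrable on Ω with mean value ḡ := ω^{−1}·∫_Ω g dx. Then ḡ ≤ 2·P(2𝔪/ω) + (4/ω)·∫_Ω |g − ḡ| dx; equivalently, ∫_Ω P(ρ(x)) dx ≤ 2ω·P(2𝔪/ω) + 4·∫_Ω |P(ρ(x)) − ḡ| dx. -/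
open Set MeasureTheory

/-- Chebyshev-type mean value bound: for a bounded open set `Ω ⊂ ℝᵈ` of
positive measure `ω`, a continuous nondecreasing `P ≥ 0` with `P 0 = 0`, and a
nonnegative integrable density `ρ` on `Ω` of total mass `𝔪 > 0` such that
`g = P ∘ ρ` is integrable with mean `ḡ = ω⁻¹ ∫_Ω g`, one has
`ḡ ≤ 2 P(2𝔪/ω) + (4/ω) ∫_Ω |g − ḡ|`. -/
theorem stmt_17 (d : ℕ) (Ω : Set (EuclideanSpace ℝ (Fin d)))
    (hΩ_open : IsOpen Ω) (hΩ_bdd : Bornology.IsBounded Ω)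
    (hΩ_pos : 0 < (volume Ω).toReal)
    (P : ℝ → ℝ) (hP_cont : ContinuousOn P (Ici 0))
    (hP_mono : MonotoneOn P (Ici 0)) (hP0 : P 0 = 0)
    (hP_nonneg : ∀ r : ℝ, 0 ≤ r → 0 ≤ P r)
    (ρ : EuclideanSpace ℝ (Fin d) → ℝ) (hρ_nonneg : ∀ x ∈ Ω, 0 ≤ ρ x)
    (hρ_int : IntegrableOn ρ Ω)
    (𝔪 : ℝ) (h𝔪 : ∫ x in Ω, ρ x = 𝔪) (h𝔪_pos : 0 < 𝔪)
    (hg_int : IntegrableOn (fun x => P (ρ x)) Ω) :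
    (volume Ω).toReal⁻¹ * ∫ x in Ω, P (ρ x) ≤
      2 * P (2 * 𝔪 / (volume Ω).toReal) +
        (4 / (volume Ω).toReal) *
          ∫ x in Ω, |P (ρ x) - (volume Ω).toReal⁻¹ * ∫ y in Ω, P (ρ y)| := by
  have hfin : volume Ω ≠ ⊤ := fun h => by simp [h] at hΩ_pos
  set ω := (volume Ω).toReal with hω
  set G := ω⁻¹ * ∫ x in Ω, P (ρ x) with hG
  have hKpos : 0 < 2 * 𝔪 / ω := by positivity
  have hp := hP_nonneg _ hKpos.le
  have hI : 0 ≤ ∫ x in Ω, |P (ρ x) - G| := integral_nonneg fun x => abs_nonneg _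
  have hc : ∀ c : ℝ, IntegrableOn (fun _ => c) Ω := fun c => integrableOn_const hfin
  by_cases h : G ≤ 2 * P (2 * 𝔪 / ω)
  · have : 0 ≤ (4 / ω) * ∫ x in Ω, |P (ρ x) - G| := by positivity
    linarith
  push Not at h
  have key : ∫ x in Ω, (G / 2 - G / 2 / (2 * 𝔪 / ω) * ρ x) ≤ ∫ x in Ω, |P (ρ x) - G| := by
    refine setIntegral_mono_on ((hc _).sub (hρ_int.const_mul _)) (hg_int.sub (hc G)).abs
      hΩ_open.measurableSet fun x hx => ?_
    have hr := hρ_nonneg x hx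
    rcases le_total (ρ x) (2 * 𝔪 / ω) with hle | hle
    · have h1 := hP_mono hr hKpos.le hle
      have h2 : 0 ≤ G / 2 / (2 * 𝔪 / ω) * ρ x := by
        have : 0 ≤ G := by linarith
        positivity
      have h3 := neg_abs_le (P (ρ x) - G)
      linarith
    · have h0 : 0 ≤ G / 2 / (2 * 𝔪 / ω) := div_nonneg (by linarith) hKpos.le
      have h1 := mul_le_mul_of_nonneg_left hle h0
      rw [div_mul_cancel₀ _ hKpos.ne'] at h1
      have := abs_nonneg (P (ρ x) - G)
      linarith
  rw [integral_sub (hc _) (hρ_int.const_mul _), integral_const_mul, h𝔪, setIntegral_const,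
    Measure.real, ← hω, smul_eq_mul] at key
  have e : ω * (G / 2) - G / 2 / (2 * 𝔪 / ω) * 𝔪 = ω * G / 4 := by
    field_simp
    ring
  rw [e] at key
  have h5 : G ≤ (4 / ω) * ∫ x in Ω, |P (ρ x) - G| := by
    rw [div_mul_eq_mul_div, le_div_iff₀ hΩ_pos]
    linarith
  linarith
end

section
/- Let φ : ℝ × ℝ^d → [0, +∞] be convex and lower semicontinuous, let k : ℝ^d → [0,∞) be a continuous nonnegative function with compact support and ∫_{ℝ^d} k(y) dy = 1, and let ρ ∈ L¹(ℝ^d; [0,∞)) and w ∈ L¹(ℝ^d; ℝ^d). Then ∫_{ℝ^d} φ( (ρ ∗ k)(x), (w ∗ k)(x) ) dx ≤ ∫_{ℝ^d} φ( ρ(x), w(x) ) dx, where ∗ denotes convolution (applied componentwise to w). -/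
open Set MeasureTheory ENNReal

theorem jensen_aux {Ω E : Type*} [MeasurableSpace Ω] [NormedAddCommGroup E] [NormedSpace ℝ E]
    [CompleteSpace E] [MeasurableSpace E] [BorelSpace E] (P : Measure Ω) [IsProbabilityMeasure P]
    (φ : E → ℝ≥0∞)
    (hc : ∀ p q : E, ∀ a b : ℝ, 0 ≤ a → 0 ≤ b → a + b = 1 →
      φ (a • p + b • q) ≤ ENNReal.ofReal a * φ p + ENNReal.ofReal b * φ q)
    (hl : LowerSemicontinuous φ) (f : Ω → E) (hf : Integrable f P)
    (hm : AEMeasurable (fun x => φ (f x)) P) :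
    φ (∫ x, f x ∂P) ≤ ∫⁻ x, φ (f x) ∂P := by
  by_cases htop : ∫⁻ x, φ (f x) ∂P = ∞
  · rw [htop]; exact le_top
  have hg : Integrable (fun x => (φ (f x)).toReal) P := integrable_toReal_of_lintegral_ne_top hm htop
  have hfin := ae_lt_top' hm htop
  let S : Set (E × ℝ) := {z | 0 ≤ z.2 ∧ φ z.1 ≤ ENNReal.ofReal z.2}
  have hSc : Convex ℝ S := by
    rintro ⟨p, s⟩ ⟨hs, hp⟩ ⟨q, t⟩ ⟨ht, hq⟩ a b ha hb hab
    simp only at hs hp ht hq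
    refine ⟨?_, ?_⟩
    · simp only [Prod.smul_mk, Prod.mk_add_mk, smul_eq_mul]; positivity
    · simp only [Prod.smul_mk, Prod.mk_add_mk, smul_eq_mul]
      refine (hc p q a b ha hb hab).trans ?_
      rw [ENNReal.ofReal_add (by positivity) (by positivity), ENNReal.ofReal_mul ha,
        ENNReal.ofReal_mul hb]
      gcongr
  have hScl : IsClosed S := by
    have h1 : IsClosed {z : E × ℝ≥0∞ | φ z.1 ≤ z.2} := hl.isClosed_epigraph
    have h2 : Continuous (fun z : E × ℝ => (z.1, ENNReal.ofReal z.2)) :=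
      continuous_fst.prodMk (ENNReal.continuous_ofReal.comp continuous_snd)
    exact (isClosed_le continuous_const continuous_snd).inter (h1.preimage h2)
  have hmem := hSc.integral_mem hScl (μ := P) (f := fun x => (f x, (φ (f x)).toReal)) (by
    filter_upwards [hfin] with x hx
    exact ⟨ENNReal.toReal_nonneg, by simp [ENNReal.ofReal_toReal hx.ne]⟩) (hf.prodMk hg)
  rw [integral_pair hf hg] at hmem
  refine hmem.2.trans ?_
  simp only
  rw [integral_toReal hm hfin, ENNReal.ofReal_toReal htop]

/-- Jensen-type inequality for mollification: if `φ : ℝ × ℝᵈ → [0,∞]` is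
jointly convex and lower semicontinuous, `k` is a continuous nonnegative
convolution kernel with compact support and unit integral, `ρ ∈ L¹(ℝᵈ)` is
nonnegative and `w ∈ L¹(ℝᵈ;ℝᵈ)`, then
`∫ φ(ρ∗k, w∗k) dx ≤ ∫ φ(ρ, w) dx`. -/
theorem stmt_19 (d : ℕ)
    (φ : ℝ × EuclideanSpace ℝ (Fin d) → ℝ≥0∞)
    (hφ_conv : ∀ p q : ℝ × EuclideanSpace ℝ (Fin d), ∀ a b : ℝ,
      0 ≤ a → 0 ≤ b → a + b = 1 →
      φ (a • p + b • q) ≤ ENNReal.ofReal a * φ p + ENNReal.ofReal b * φ q)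
    (hφ_lsc : LowerSemicontinuous φ)
    (k : EuclideanSpace ℝ (Fin d) → ℝ) (hk_cont : Continuous k)
    (hk_supp : HasCompactSupport k) (hk_nonneg : ∀ y, 0 ≤ k y)
    (hk_int : ∫ y, k y = 1)
    (ρ : EuclideanSpace ℝ (Fin d) → ℝ) (hρ_int : Integrable ρ)
    (hρ_nonneg : ∀ x, 0 ≤ ρ x)
    (w : EuclideanSpace ℝ (Fin d) → EuclideanSpace ℝ (Fin d))
    (hw_int : Integrable w) :
    ∫⁻ x, φ ((∫ y, ρ (x - y) * k y), (∫ y, k y • w (x - y))) ≤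
      ∫⁻ x, φ (ρ x, w x) := by
  have hki : Integrable k := hk_cont.integrable_of_hasCompactSupport hk_supp
  have hkm : Measurable (fun y => ENNReal.ofReal (k y)) :=
    hk_cont.measurable.ennreal_ofReal
  have hk1 : ∫⁻ y, ENNReal.ofReal (k y) = 1 := by
    rw [← ofReal_integral_eq_lintegral_ofReal hki (Filter.Eventually.of_forall hk_nonneg), hk_int]
    simp
  set P : Measure (EuclideanSpace ℝ (Fin d)) := volume.withDensity (fun y => ENNReal.ofReal (k y)) with hP
  have hPp : IsProbabilityMeasure P := ⟨by simp [hP, hk1]⟩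
  have hPac : P ≪ volume := withDensity_absolutelyContinuous _ _
  obtain ⟨C, hC⟩ := hk_cont.bounded_above_of_compact_support hk_supp
  have hφm : Measurable φ := hφ_lsc.measurable
  set f : EuclideanSpace ℝ (Fin d) → ℝ × EuclideanSpace ℝ (Fin d) := fun x => (ρ x, w x) with hf
  have hfi : Integrable f := hρ_int.prodMk hw_int
  have hφf : AEMeasurable (fun x => φ (f x)) := hφm.comp_aemeasurable hfi.aemeasurable
  have key : ∀ x, φ ((∫ y, ρ (x - y) * k y), (∫ y, k y • w (x - y))) ≤
      ∫⁻ y, ENNReal.ofReal (k y) * φ (f (x - y)) := by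
    intro x
    have hshift : Integrable (fun y => f (x - y)) := hfi.comp_sub_left x
    have hmul : Integrable (fun y => k y • f (x - y)) :=
      hshift.bdd_smul C hk_cont.aestronglyMeasurable (Filter.Eventually.of_forall hC)
    have hPi : Integrable (fun y => f (x - y)) P := by
      rw [hP, integrable_withDensity_iff_integrable_smul' hkm (by simp)]
      simpa [ENNReal.toReal_ofReal (hk_nonneg _)] using hmul
    have hm' : AEMeasurable (fun y => φ (f (x - y))) :=
      hφm.comp_aemeasurable hshift.aemeasurable
    have hj := jensen_aux P φ hφ_conv hφ_lsc (fun y => f (x - y)) hPi (hm'.mono_ac hPac)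
    have e1 : ∫ y, f (x - y) ∂P = ((∫ y, ρ (x - y) * k y), (∫ y, k y • w (x - y))) := by
      rw [hP, integral_withDensity_eq_integral_toReal_smul hkm (by simp)]
      simp only [ENNReal.toReal_ofReal (hk_nonneg _)]
      have := integral_pair hmul.fst hmul.snd
      simp only [hf, Prod.smul_mk, smul_eq_mul] at this ⊢
      rw [this]
      simp only [mul_comm]
    rw [e1, hP, lintegral_withDensity_eq_lintegral_mul₀ hkm.aemeasurable hm'] at hj
    exact hj
  calc _ ≤ ∫⁻ x, ∫⁻ y, ENNReal.ofReal (k y) * φ (f (x - y)) := lintegral_mono key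
    _ = ∫⁻ y, ∫⁻ x, ENNReal.ofReal (k y) * φ (f (x - y)) := by
      apply lintegral_lintegral_swap
      refine AEMeasurable.mul (hkm.comp measurable_snd).aemeasurable ?_
      exact hφf.comp_quasiMeasurePreserving
        (quasiMeasurePreserving_sub (volume : Measure (EuclideanSpace ℝ (Fin d))) (volume : Measure (EuclideanSpace ℝ (Fin d))))
    _ = ∫⁻ y, ENNReal.ofReal (k y) * ∫⁻ x, φ (f x) := by
      congr 1; ext y
      rw [lintegral_const_mul' _ _ (by simp), lintegral_sub_right_eq_self (fun x => φ (f x)) y]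
    _ = ∫⁻ x, φ (f x) := by
      rw [lintegral_mul_const _ hkm, hk1, one_mul]
end
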